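/- Let 1/2 < t < 1 and q > r ≥ 0 be fixed real constants and put δ := 1−t. Suppose M and N₀ are positive integers satisfying M ≥ max{ 4^{1/(1-t)}·(2(2t−1)/(1−t−δt))^{2/(t(1-t))}, (50·(11/10)^{t(2-t)})^{2/(1-t)} } and N₀ ≥ max{ 4752M⁴, 2r/(q((264M²)^{1/t}−2)), (10q(2q)^t M)^{1/(1-t)}, 2^{1/(1−t−δt)}·(q+r)/q, q^{-1}·(q(1−t−δt)/(q+r)^{t+δt})^{1/(1−t−δt)}, 1/(1−2^{−1/(2t−1)}), q^{-1}·(2q(1−t−δt))^{2/(1−δ)}·(2/(q(2t−1)))^{(1+δ)/(1−δ)}·M^{(2−δ)/(1−δ)}, q^{-1}·(2/(q(2t−1)))^{1/(2t−1)} }. Then for any positive integer n₀ ≥ N₀, the squares of sidelength (qn+r)^{-t} for n ≥ n₀ can be packed perfectly into a square of area ∑_{n=n₀}^{∞} (qn+r)^{-2t}. -/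

import Mathlib

open Set MeasureTheory

/-- The axis-parallel square with lower-left corner `c` and sidelength `s`. -/
noncomputable def square (c : ℝ × ℝ) (s : ℝ) : Set (ℝ × ℝ) :=
  Set.Icc c.1 (c.1 + s) ×ˢ Set.Icc c.2 (c.2 + s)

/-- The family of sets `S i` is packed perfectly into `Ω`: the sets are contained in `Ω`,
have pairwise disjoint interiors, and cover `Ω` up to a Lebesgue-null set. -/
def PerfectlyPacked {ι : Type*} (S : ι → Set (ℝ × ℝ)) (Ω : Set (ℝ × ℝ)) : Prop :=
  (∀ i, S i ⊆ Ω) ∧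
  (Pairwise fun i j => Disjoint (interior (S i)) (interior (S j))) ∧
  volume (Ω \ ⋃ i, S i) = 0

/-! The squares are placed greedily. At every stage the uncovered part of the big square is a
finite union of boxes, obtained by guillotine cuts, whose weights (semiperimeter times the `δ`-th
power of the shorter side) add up to at most a budget. The area of a box is at most its weight times
the `(1 - δ)`-th power of its shorter side. Hence, if all boxes were narrower than `H` times the
next side `x n`, their total area would be smaller than that of the squares still to be placed; so
some box is at least `H * x n` thick. Cut a slab of height `H * x n` off this box and fill it with
columns of `H` squares. The sides hardly vary along a slab, so the gaps are thin and their weight is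
small; for `x i = (N + i) ^ (-t)` and `δ = 1 - t` it is paid for by a budget growing like
`(N + n) ^ (δ ^ 2)`. In the limit all squares are placed inside a square of the same area, so the
packing is perfect. -/

/-- An axis-parallel rectangle with lower-left corner `corner`. -/
structure Box where
  corner : ℝ × ℝ
  width : ℝ
  height : ℝ

namespace Box

/-- The half-open rectangle underlying a box; with this convention cutting a box yields disjoint
pieces. -/
def toSet (R : Box) : Set (ℝ × ℝ) :=
  Ico R.corner.1 (R.corner.1 + R.width) ×ˢ Ico R.corner.2 (R.corner.2 + R.height)

/-- The area of a box. -/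
def area (R : Box) : ℝ := R.width * R.height

/-- The semiperimeter of a box multiplied by the `δ`-th power of its shorter side, the potential
that controls how fragmented the uncovered region has become. -/
noncomputable def weight (δ : ℝ) (R : Box) : ℝ :=
  min R.width R.height ^ δ * (R.width + R.height)

/-- Reflection of a box in the diagonal. -/
def swap (R : Box) : Box := ⟨R.corner.swap, R.height, R.width⟩

lemma weight_swap (δ : ℝ) (R : Box) : R.swap.weight δ = R.weight δ := by
  simp only [weight, swap, min_comm, add_comm]

lemma weight_le_of_min_le {δ c : ℝ} {R : Box} (hδ : 0 ≤ δ) (hw : 0 ≤ R.width)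
    (hh : 0 ≤ R.height) (h : min R.width R.height ≤ c) :
    R.weight δ ≤ c ^ δ * (R.width + R.height) := by
  have := le_min hw hh
  unfold weight
  gcongr

lemma area_le_of_min_le {R : Box} {δ y : ℝ} (hδ : δ ≤ 1) (hw : 0 ≤ R.width) (hh : 0 ≤ R.height)
    (h : min R.width R.height ≤ y) : R.area ≤ y ^ (1 - δ) * R.weight δ := by
  have hmin := le_min hw hh
  have hy := hmin.trans h
  have : 0 ≤ 1 - δ := sub_nonneg.2 hδ
  calc R.area = min R.width R.height * max R.width R.height := (min_mul_max _ _).symm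
    _ = min R.width R.height ^ (1 - δ) * min R.width R.height ^ δ * max R.width R.height := by
        rw [← Real.rpow_add' hmin (by simp), sub_add_cancel, Real.rpow_one]
    _ ≤ y ^ (1 - δ) * min R.width R.height ^ δ * (R.width + R.height) := by
        gcongr
        exact max_le (le_add_of_nonneg_right hh) (le_add_of_nonneg_left hw)
    _ = y ^ (1 - δ) * R.weight δ := mul_assoc _ _ _

/-- `Q.IsDissection L`: the boxes in `L` arise from `Q` by successive guillotine cuts. -/
inductive IsDissection (Q : Box) : Multiset Box → Prop
  | self : Q.IsDissection {Q}
  | cutWidth {p : ℝ × ℝ} {a₁ a₂ b : ℝ} {L : Multiset Box} (h₁ : 0 ≤ a₁) (h₂ : 0 ≤ a₂) :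
      Q.IsDissection (⟨p, a₁ + a₂, b⟩ ::ₘ L) →
      Q.IsDissection (⟨p, a₁, b⟩ ::ₘ ⟨(p.1 + a₁, p.2), a₂, b⟩ ::ₘ L)
  | cutHeight {p : ℝ × ℝ} {a b₁ b₂ : ℝ} {L : Multiset Box} (h₁ : 0 ≤ b₁) (h₂ : 0 ≤ b₂) :
      Q.IsDissection (⟨p, a, b₁ + b₂⟩ ::ₘ L) →
      Q.IsDissection (⟨p, a, b₁⟩ ::ₘ ⟨(p.1, p.2 + b₁), a, b₂⟩ ::ₘ L)

namespace IsDissection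

variable {Q R : Box} {L L' : Multiset Box}

lemma refine (hQ : Q.IsDissection (R ::ₘ L)) (hR : R.IsDissection L') :
    Q.IsDissection (L' + L) := by
  induction hR with
  | self => simpa only [Multiset.singleton_add] using hQ
  | cutWidth h₁ h₂ _ ih =>
    rw [Multiset.cons_add] at ih
    simpa only [Multiset.cons_add] using ih.cutWidth h₁ h₂
  | cutHeight h₁ h₂ _ ih =>
    rw [Multiset.cons_add] at ih
    simpa only [Multiset.cons_add] using ih.cutHeight h₁ h₂

lemma swap (h : Q.IsDissection L) : Q.swap.IsDissection (L.map Box.swap) := by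
  induction h with
  | self => exact self
  | cutWidth h₁ h₂ _ ih =>
    simp only [Multiset.map_cons] at ih ⊢
    exact ih.cutHeight h₁ h₂
  | cutHeight h₁ h₂ _ ih =>
    simp only [Multiset.map_cons] at ih ⊢
    exact ih.cutWidth h₁ h₂

lemma sum_map_eq {A : Type*} [AddCommMonoid A] {f : Box → A}
    (hwidth : ∀ (p : ℝ × ℝ) (a₁ a₂ b : ℝ), 0 ≤ a₁ → 0 ≤ a₂ →
      f ⟨p, a₁ + a₂, b⟩ = f ⟨p, a₁, b⟩ + f ⟨(p.1 + a₁, p.2), a₂, b⟩)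
    (hheight : ∀ (p : ℝ × ℝ) (a b₁ b₂ : ℝ), 0 ≤ b₁ → 0 ≤ b₂ →
      f ⟨p, a, b₁ + b₂⟩ = f ⟨p, a, b₁⟩ + f ⟨(p.1, p.2 + b₁), a, b₂⟩)
    (h : Q.IsDissection L) : (L.map f).sum = f Q := by
  induction h with
  | self => simp only [Multiset.map_singleton, Multiset.sum_singleton]
  | cutWidth h₁ h₂ _ ih =>
    rw [← ih]
    simp only [Multiset.map_cons, Multiset.sum_cons, hwidth _ _ _ _ h₁ h₂, add_assoc]
  | cutHeight h₁ h₂ _ ih =>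
    rw [← ih]
    simp only [Multiset.map_cons, Multiset.sum_cons, hheight _ _ _ _ h₁ h₂, add_assoc]

lemma sum_area (h : Q.IsDissection L) : (L.map area).sum = Q.area :=
  h.sum_map_eq (fun _ _ _ _ _ _ => add_mul _ _ _) fun _ _ _ _ _ _ => mul_add _ _ _

lemma sum_indicator (h : Q.IsDissection L) (z : ℝ × ℝ) :
    (L.map fun R => R.toSet.indicator (1 : ℝ × ℝ → ℕ) z).sum = Q.toSet.indicator 1 z := by
  classical
  refine h.sum_map_eq (f := fun R => R.toSet.indicator (1 : ℝ × ℝ → ℕ) z) ?_ ?_ <;>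
  · intro p u v w hu hv
    simp only [indicator_apply, toSet, mem_prod, mem_Ico, Pi.one_apply]
    grind

lemma toSet_subset (h : Q.IsDissection L) (hR : R ∈ L) : R.toSet ⊆ Q.toSet := by
  intro z hz
  have hle : R.toSet.indicator (1 : ℝ × ℝ → ℕ) z ≤ Q.toSet.indicator 1 z :=
    h.sum_indicator z ▸ Multiset.single_le_sum (fun _ _ => Nat.zero_le _) _
      (Multiset.mem_map.2 ⟨R, hR, rfl⟩)
  by_contra hzQ
  simp [hz, hzQ] at hle

lemma disjoint_toSet {R₁ R₂ : Box} (h : Q.IsDissection L) (hL : {R₁, R₂} ≤ L) :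
    Disjoint R₁.toSet R₂.toSet := by
  obtain ⟨L', rfl⟩ := Multiset.le_iff_exists_add.1 hL
  refine Set.disjoint_left.2 fun z hz₁ hz₂ => ?_
  have hle : Q.toSet.indicator (1 : ℝ × ℝ → ℕ) z ≤ 1 := indicator_apply_le' (fun _ => le_rfl)
    fun _ => Nat.zero_le _
  rw [← h.sum_indicator z] at hle
  simp [hz₁, hz₂] at hle

lemma sides_le (h : Q.IsDissection L) (hw : 0 ≤ Q.width) (hh : 0 ≤ Q.height) :
    ∀ R ∈ L, (0 ≤ R.width ∧ R.width ≤ Q.width) ∧ 0 ≤ R.height ∧ R.height ≤ Q.height := by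
  induction h with
  | self => simp [hw, hh]
  | cutWidth h₁ h₂ _ ih | cutHeight h₁ h₂ _ ih =>
    simp only [Multiset.forall_mem_cons] at ih ⊢
    grind

end IsDissection

end Box

/-- The squares of side lengths `x i` with corners `pos i`, for `n ≤ i < m`. -/
def placedSquares (x : ℕ → ℝ) (pos : ℕ → ℝ × ℝ) (n m : ℕ) : Multiset Box :=
  (Multiset.Ico n m).map fun i => ⟨pos i, x i, x i⟩

section PlacedSquares

variable (x : ℕ → ℝ)

lemma placedSquares_self (pos : ℕ → ℝ × ℝ) (n : ℕ) : placedSquares x pos n n = 0 := by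
  simp [placedSquares]

lemma placedSquares_succ (pos : ℕ → ℝ × ℝ) (n : ℕ) :
    placedSquares x pos n (n + 1) = {⟨pos n, x n, x n⟩} := by
  simp [placedSquares, Multiset.Ico]

lemma map_swap_placedSquares (pos : ℕ → ℝ × ℝ) (n m : ℕ) :
    (placedSquares x pos n m).map Box.swap = placedSquares x (fun i => (pos i).swap) n m :=
  Multiset.map_map _ _ _

lemma placedSquares_congr {pos pos' : ℕ → ℝ × ℝ} {n m : ℕ}
    (h : ∀ i, n ≤ i → i < m → pos i = pos' i) :
    placedSquares x pos n m = placedSquares x pos' n m :=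
  Multiset.map_congr rfl fun i hi => by
    rw [h i (Multiset.mem_Ico.1 hi).1 (Multiset.mem_Ico.1 hi).2]

lemma placedSquares_add {n l m : ℕ} (hnl : n ≤ l) (hlm : l ≤ m) (pos pos' : ℕ → ℝ × ℝ) :
    placedSquares x pos n l + placedSquares x pos' l m =
      placedSquares x (fun i => if i < l then pos i else pos' i) n m := by
  rw [placedSquares_congr x (pos' := fun i => if i < l then pos i else pos' i)
      fun i _ hi => (if_pos hi).symm,
    placedSquares_congr x (pos := pos') (pos' := fun i => if i < l then pos i else pos' i)
      fun i hi _ => (if_neg hi.not_gt).symm,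
    placedSquares, placedSquares, ← Multiset.map_add, Multiset.Ico_add_Ico_eq_Ico hnl hlm]
  rfl

lemma pair_le_placedSquares (pos : ℕ → ℝ × ℝ) {n m i j : ℕ} (hi : n ≤ i ∧ i < m)
    (hj : n ≤ j ∧ j < m) (hij : i ≠ j) :
    {⟨pos i, x i, x i⟩, ⟨pos j, x j, x j⟩} ≤ placedSquares x pos n m := by
  have hpair : ({i, j} : Multiset ℕ) ≤ Multiset.Ico n m :=
    (Multiset.le_iff_subset (by simp [hij])).2 fun l hl => by
      rw [Multiset.mem_Ico]
      rcases Multiset.mem_cons.1 hl with rfl | hl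
      · exact hi
      · rwa [Multiset.mem_singleton.1 hl]
  exact Multiset.map_le_map hpair

end PlacedSquares

lemma Box.IsDissection.append_placedSquares {Q R : Box} {L L' : Multiset Box} {x : ℕ → ℝ}
    {pos pos' : ℕ → ℝ × ℝ} {n l m : ℕ} (hnl : n ≤ l) (hlm : l ≤ m)
    (hQ : Q.IsDissection (placedSquares x pos n l + R ::ₘ L))
    (hR : R.IsDissection (placedSquares x pos' l m + L')) :
    Q.IsDissection
      (placedSquares x (fun i => if i < l then pos i else pos' i) n m + (L' + L)) := by
  rw [← placedSquares_add x hnl hlm]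
  rw [Multiset.add_cons] at hQ
  convert hQ.refine hR using 1
  abel

/-- `Fillable x δ a b n m B`: every box with sides `a` and `b` can be dissected into the squares of
side lengths `x n, …, x (m - 1)` and leftover boxes of total weight at most `B`. -/
def Fillable (x : ℕ → ℝ) (δ a b : ℝ) (n m : ℕ) (B : ℝ) : Prop :=
  n ≤ m ∧ ∀ p, ∃ (pos : ℕ → ℝ × ℝ) (L : Multiset Box),
    Box.IsDissection ⟨p, a, b⟩ (placedSquares x pos n m + L) ∧ (L.map (Box.weight δ)).sum ≤ B

namespace Fillable

variable {x : ℕ → ℝ} {δ a b : ℝ} {n l m : ℕ} {B : ℝ}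

lemma mono {B' : ℝ} (h : Fillable x δ a b n m B) (hB : B ≤ B') : Fillable x δ a b n m B' :=
  ⟨h.1, fun p =>
    let ⟨pos, L, hL, hw⟩ := h.2 p
    ⟨pos, L, hL, hw.trans hB⟩⟩

lemma leftover {c : ℝ} (hδ : 0 ≤ δ) (ha : 0 ≤ a) (hb : 0 ≤ b) (hc : min a b ≤ c) :
    Fillable x δ a b n n (c ^ δ * (a + b)) := by
  refine ⟨le_rfl, fun p => ⟨0, {⟨p, a, b⟩}, ?_, ?_⟩⟩
  · simpa only [placedSquares_self, zero_add] using Box.IsDissection.self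
  · simpa only [Multiset.map_singleton, Multiset.sum_singleton]
      using Box.weight_le_of_min_le hδ ha hb hc

lemma single : Fillable x δ (x n) (x n) n (n + 1) 0 := by
  refine ⟨n.le_succ, fun p => ⟨fun _ => p, 0, ?_, by simp⟩⟩
  simpa only [placedSquares_succ, add_zero] using Box.IsDissection.self

lemma swap (h : Fillable x δ a b n m B) : Fillable x δ b a n m B := by
  refine ⟨h.1, fun p => ?_⟩
  obtain ⟨pos, L, hL, hw⟩ := h.2 p.swap
  refine ⟨fun i => (pos i).swap, L.map Box.swap, ?_, ?_⟩
  · rw [← map_swap_placedSquares, ← Multiset.map_add]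
    exact hL.swap
  · simpa only [Multiset.map_map, Function.comp_def, Box.weight_swap] using hw

lemma append_width {a₁ a₂ B₁ B₂ : ℝ} (h₁ : Fillable x δ a₁ b n l B₁)
    (h₂ : Fillable x δ a₂ b l m B₂) (ha₁ : 0 ≤ a₁) (ha₂ : 0 ≤ a₂) :
    Fillable x δ (a₁ + a₂) b n m (B₁ + B₂) := by
  refine ⟨h₁.1.trans h₂.1, fun p => ?_⟩
  obtain ⟨pos₁, L₁, hL₁, hw₁⟩ := h₁.2 p
  obtain ⟨pos₂, L₂, hL₂, hw₂⟩ := h₂.2 (p.1 + a₁, p.2)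
  have hcut := (Box.IsDissection.self (Q := ⟨p, a₁ + a₂, b⟩)).cutWidth ha₁ ha₂
  have hleft := hcut.refine hL₁
  rw [add_assoc, Multiset.add_cons, add_zero] at hleft
  refine ⟨_, L₂ + L₁, hleft.append_placedSquares h₁.1 h₂.1 hL₂, ?_⟩
  rw [Multiset.map_add, Multiset.sum_add, add_comm B₁]
  exact add_le_add hw₂ hw₁

lemma append_height {b₁ b₂ B₁ B₂ : ℝ} (h₁ : Fillable x δ a b₁ n l B₁)
    (h₂ : Fillable x δ a b₂ l m B₂) (hb₁ : 0 ≤ b₁) (hb₂ : 0 ≤ b₂) :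
    Fillable x δ a (b₁ + b₂) n m (B₁ + B₂) :=
  (h₁.swap.append_width h₂.swap hb₁ hb₂).swap

lemma row {a B : ℕ → ℝ} {a' B' : ℝ} {i : ℕ → ℕ} {k : ℕ} (ha : ∀ j < k, 0 ≤ a j)
    (h : ∀ j < k, Fillable x δ (a j) b (i j) (i (j + 1)) (B j)) (ha' : 0 ≤ a')
    (hrest : Fillable x δ a' b (i k) m B') :
    Fillable x δ (∑ j ∈ Finset.range k, a j + a') b (i 0) m
      (∑ j ∈ Finset.range k, B j + B') := by
  induction k generalizing a' B' with
  | zero => simpa using hrest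
  | succ k ih =>
    have hk := k.lt_succ_self
    rw [Finset.sum_range_succ, Finset.sum_range_succ, add_assoc, add_assoc]
    exact ih (fun j hj => ha j (hj.trans hk)) (fun j hj => h j (hj.trans hk))
      (add_nonneg (ha k hk) ha') ((h k hk).append_width hrest (ha k hk) ha')

lemma stack {b B : ℕ → ℝ} {b' B' : ℝ} {i : ℕ → ℕ} {k : ℕ} (hb : ∀ j < k, 0 ≤ b j)
    (h : ∀ j < k, Fillable x δ a (b j) (i j) (i (j + 1)) (B j)) (hb' : 0 ≤ b')
    (hrest : Fillable x δ a b' (i k) m B') :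
    Fillable x δ a (∑ j ∈ Finset.range k, b j + b') (i 0) m
      (∑ j ∈ Finset.range k, B j + B') :=
  (row hb (fun j hj => (h j hj).swap) hb' hrest.swap).swap

lemma strip {w c : ℝ} (hδ : 0 ≤ δ) (hx : 0 ≤ x n) (hw : x n ≤ w) (hc : w - x n ≤ c) :
    Fillable x δ w (x n) n (n + 1) (c ^ δ * w) := by
  have hw' := sub_nonneg.2 hw
  have hfill := single.append_width (x := x) (n := n)
    (leftover hδ hw' hx ((min_le_left _ _).trans hc)) hx hw'
  rwa [zero_add, sub_add_cancel, add_sub_cancel] at hfill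

end Fillable

lemma exists_sum_range_le_lt_sum_range_succ {y : ℕ → ℝ} {a : ℝ} {K : ℕ} (h0 : y 0 ≤ a)
    (hK : a < ∑ j ∈ Finset.range (K + 1), y j) :
    ∃ k, 0 < k ∧ k ≤ K ∧ ∑ j ∈ Finset.range k, y j ≤ a ∧ a < ∑ j ∈ Finset.range (k + 1), y j := by
  classical
  have hex : ∃ k, a < ∑ j ∈ Finset.range (k + 1), y j := ⟨K, hK⟩
  have hfind := Nat.find_spec hex
  have hne : Nat.find hex ≠ 0 := fun hzero => by
    rw [hzero, zero_add, Finset.sum_range_one] at hfind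
    exact hfind.not_ge h0
  refine ⟨Nat.find hex, Nat.pos_of_ne_zero hne, Nat.find_le hK, ?_, hfind⟩
  obtain ⟨k, hk⟩ := Nat.exists_eq_succ_of_ne_zero hne
  rw [hk]
  exact not_lt.1 (Nat.find_min hex (by omega))

namespace Fillable

variable {x : ℕ → ℝ} {δ θ a b : ℝ} {n H : ℕ}

lemma column {s : ℝ} (hδ : 0 ≤ δ) (hx : ∀ i, 0 ≤ x i) (hanti : Antitone x) (hθ : 0 ≤ θ)
    (hHθ : H * θ ≤ 1) (hn : x n ≤ s) (hvar : ∀ i < H, (1 - θ) * s ≤ x (n + i)) :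
    Fillable x δ (x n) (H * s) n (n + H) ((H + 2) * (H * θ * s) ^ δ * s) := by
  have hs : 0 ≤ s := (hx n).trans hn
  have hsum_le : ∑ i ∈ Finset.range H, x (n + i) ≤ H * s := by
    simpa using Finset.sum_le_card_nsmul (Finset.range H) (fun i => x (n + i)) s
      fun i _ => (hanti (Nat.le_add_right n i)).trans hn
  have hle_sum : H * ((1 - θ) * s) ≤ ∑ i ∈ Finset.range H, x (n + i) := by
    simpa using Finset.card_nsmul_le_sum (Finset.range H) (fun i => x (n + i)) _
      fun i hi => hvar i (Finset.mem_range.1 hi)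
  have hstrip : ∀ i < H, Fillable x δ (x n) (x (n + i)) (n + i) (n + (i + 1))
      ((H * θ * s) ^ δ * x n) := fun i hi => by
    have hH : (1 : ℝ) ≤ H := by exact_mod_cast hi.pos
    refine strip hδ (hx _) (hanti (Nat.le_add_right n i)) ?_
    nlinarith [hvar i hi, mul_nonneg (mul_nonneg hθ hs) (sub_nonneg.2 hH)]
  have htop : Fillable x δ (x n) (H * s - ∑ i ∈ Finset.range H, x (n + i)) (n + H) (n + H)
      ((H * θ * s) ^ δ * (x n + (H * s - ∑ i ∈ Finset.range H, x (n + i)))) :=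
    leftover hδ (hx n) (sub_nonneg.2 hsum_le) ((min_le_right _ _).trans (by linarith))
  have hfill := stack (fun i _ => hx (n + i)) hstrip (sub_nonneg.2 hsum_le) htop
  rw [add_sub_cancel, Finset.sum_const, Finset.card_range, nsmul_eq_mul] at hfill
  refine hfill.mono ?_
  have : 0 ≤ (H * θ * s) ^ δ := by positivity
  have hgap : H * s - ∑ i ∈ Finset.range H, x (n + i) ≤ s := by nlinarith
  calc H * ((H * θ * s) ^ δ * x n) +
        (H * θ * s) ^ δ * (x n + (H * s - ∑ i ∈ Finset.range H, x (n + i)))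
      ≤ H * ((H * θ * s) ^ δ * s) + (H * θ * s) ^ δ * (s + s) := by gcongr
    _ = (H + 2) * (H * θ * s) ^ δ * s := by ring

lemma exists_column_count (hx : ∀ i, 0 < x i) (hanti : Antitone x) (hθ : 2 * θ ≤ 1)
    (hvar : ∀ i : ℕ, i * x n ≤ (2 * a + x n) * H → (1 - θ) * x n ≤ x (n + i)) (ha : x n ≤ a) :
    ∃ k : ℕ, 0 < k ∧ k * x n ≤ 2 * a ∧
      (∑ j ∈ Finset.range k, x (n + j * H) ≤ a ∧ a ≤ ∑ j ∈ Finset.range k, x (n + j * H) + x n) ∧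
      ∀ j < k, ∀ i < H, (1 - θ) * x n ≤ x (n + j * H + i) := by
  have hs := hx n
  have ha0 : 0 ≤ a := hs.le.trans ha
  set K := ⌊2 * a / x n⌋₊
  have hcount : ∀ k : ℕ, k ≤ K → k * x n ≤ 2 * a := fun k hk =>
    (le_div_iff₀ hs).1 ((Nat.le_floor_iff (by positivity)).1 hk)
  have hvar' : ∀ j ≤ K, ∀ i ≤ H, (1 - θ) * x n ≤ x (n + j * H + i) := fun j hj i hi => by
    rw [add_assoc]
    refine hvar _ ?_
    push_cast
    calc (j * H + i : ℝ) * x n ≤ (j * H + H) * x n := by gcongr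
      _ = (j * x n + x n) * H := by ring
      _ ≤ (2 * a + x n) * H := by have := hcount j hj; gcongr
  have hlt_sum : a < ∑ j ∈ Finset.range (K + 1), x (n + j * H) := by
    have hK : 2 * a < (K + 1) * x n := (div_lt_iff₀ hs).1 (Nat.lt_floor_add_one _)
    have hle := Finset.card_nsmul_le_sum (Finset.range (K + 1)) (fun j => x (n + j * H))
      ((1 - θ) * x n) fun j hj => hvar' j (Finset.mem_range_succ_iff.1 hj) 0 H.zero_le
    rw [Finset.card_range, nsmul_eq_mul, Nat.cast_add_one] at hle
    nlinarith [mul_pos (Nat.cast_add_one_pos (α := ℝ) K) hs]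
  obtain ⟨k, hk, hkK, hsum_le, hlt⟩ := exists_sum_range_le_lt_sum_range_succ
    (y := fun j => x (n + j * H)) (by simpa using ha) hlt_sum
  rw [Finset.sum_range_succ] at hlt
  exact ⟨k, hk, hcount k hkK,
    ⟨hsum_le, hlt.le.trans (add_le_add le_rfl (hanti (Nat.le_add_right _ _)))⟩,
    fun j hj i hi => hvar' j (hj.le.trans hkK) i hi.le⟩

lemma slab (hδ : 0 ≤ δ) (hx : ∀ i, 0 < x i) (hanti : Antitone x) (hH : 2 ≤ H) (hθ : 0 ≤ θ)
    (hHθ : H * θ ≤ 1) (hvar : ∀ i : ℕ, i * x n ≤ (2 * a + x n) * H → (1 - θ) * x n ≤ x (n + i))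
    (ha : x n ≤ a) :
    ∃ k : ℕ, 0 < k ∧ k * x n ≤ 2 * a ∧ Fillable x δ a (H * x n) n (n + k * H)
      (k * ((H + 2) * (H * θ * x n) ^ δ * x n) + (H + 1) * x n ^ δ * x n) := by
  have hs := hx n
  have hH' : (2 : ℝ) ≤ H := by exact_mod_cast hH
  obtain ⟨k, hk, hkx, ⟨hsum_le, hle_sum⟩, hlarge⟩ :=
    exists_column_count hx hanti (by nlinarith) hvar ha
  refine ⟨k, hk, hkx, ?_⟩
  have hgap := sub_nonneg.2 hsum_le
  have hgap_le := sub_le_iff_le_add'.2 hle_sum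
  have hcolumn : ∀ j < k, Fillable x δ (x (n + j * H)) (H * x n) (n + j * H) (n + (j + 1) * H)
      ((H + 2) * (H * θ * x n) ^ δ * x n) := fun j hj => by
    rw [Nat.succ_mul, ← add_assoc]
    exact column hδ (fun i => (hx i).le) hanti hθ hHθ (hanti (Nat.le_add_right _ _)) (hlarge j hj)
  have hrest : Fillable x δ (a - ∑ j ∈ Finset.range k, x (n + j * H)) (H * x n) (n + k * H)
      (n + k * H) (x n ^ δ * (a - ∑ j ∈ Finset.range k, x (n + j * H) + H * x n)) :=
    leftover hδ hgap (by positivity) ((min_le_left _ _).trans hgap_le)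
  have hfill := row (fun j _ => (hx (n + j * H)).le) hcolumn hgap hrest
  rw [add_sub_cancel, Finset.sum_const, Finset.card_range, nsmul_eq_mul, zero_mul,
    add_zero] at hfill
  refine hfill.mono (add_le_add le_rfl ?_)
  calc x n ^ δ * (a - ∑ j ∈ Finset.range k, x (n + j * H) + H * x n)
      ≤ x n ^ δ * (x n + H * x n) := by gcongr
    _ = (H + 1) * x n ^ δ * x n := by ring

/-- Cuts a slab of height `H * x n` off the longer side. Since the box is at least `H * x n` thick,
the weight lost by shortening it pays for the last box of the slab. -/
lemma exists_of_wide (hδ : 0 ≤ δ) (hx : ∀ i, 0 < x i) (hanti : Antitone x) (hH : 2 ≤ H)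
    (hHδ : (H + 1 : ℝ) ≤ H * H ^ δ) (hθ : 0 ≤ θ) (hHθ : H * θ ≤ 1)
    (hvar : ∀ i : ℕ, i * x n ≤ (2 * min a b + x n) * H → (1 - θ) * x n ≤ x (n + i))
    (hwide : H * x n ≤ min a b) :
    ∃ k : ℕ, 0 < k ∧ k * x n ≤ 2 * min a b ∧ Fillable x δ a b n (n + k * H)
      ((⟨0, a, b⟩ : Box).weight δ + k * ((H + 2) * (H * θ * x n) ^ δ * x n)) := by
  wlog hab : a ≤ b generalizing a b
  · obtain ⟨k, hk, hk', hfill⟩ := this (by rwa [min_comm]) (by rwa [min_comm]) (le_of_not_ge hab)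
    refine ⟨k, hk, by rwa [min_comm], ?_⟩
    rw [← Box.weight_swap] at hfill
    exact hfill.swap
  rw [min_eq_left hab] at hvar hwide ⊢
  have hs := hx n
  have hH' : (2 : ℝ) ≤ H := by exact_mod_cast hH
  have hHs : 0 ≤ H * x n := by positivity
  have hsa : x n ≤ a := (le_mul_of_one_le_left hs.le (by linarith)).trans hwide
  have ha := hs.le.trans hsa
  obtain ⟨k, hk, hk', hslab⟩ := slab hδ hx hanti hH hθ hHθ hvar hsa
  have hrest : 0 ≤ b - H * x n := sub_nonneg.2 (hwide.trans hab)
  have hfill := hslab.append_height (leftover hδ ha hrest (min_le_left _ _)) hHs hrest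
  rw [add_sub_cancel] at hfill
  refine ⟨k, hk, hk', hfill.mono ?_⟩
  have hpay : (H + 1) * x n ^ δ * x n ≤ a ^ δ * (H * x n) := by
    calc (H + 1) * x n ^ δ * x n ≤ H * H ^ δ * x n ^ δ * x n := by gcongr
      _ = (H * x n) ^ δ * (H * x n) := by
          rw [Real.mul_rpow (by positivity) hs.le]; ring
      _ ≤ a ^ δ * (H * x n) := by gcongr
  rw [Box.weight, min_eq_left hab]
  linarith

end Fillable

/-- A stage of the greedy algorithm: the squares of side lengths `x i` with `i < next` have been
placed in `Q`, and the uncovered region is divided into `boxes`, whose total weight is within the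
budget `V next`. -/
structure Stage (x : ℕ → ℝ) (δ : ℝ) (Q : Box) (V : ℕ → ℝ) where
  next : ℕ
  pos : ℕ → ℝ × ℝ
  boxes : Multiset Box
  isDissection : Q.IsDissection (placedSquares x pos 0 next + boxes)
  weight_le : (boxes.map (Box.weight δ)).sum ≤ V next

namespace Stage

variable {x : ℕ → ℝ} {δ W : ℝ} {Q : Box} {V : ℕ → ℝ}

lemma sum_area_boxes (hsum : HasSum (fun i => x i ^ 2) Q.area) (S : Stage x δ Q V) :
    (S.boxes.map Box.area).sum = ∑' i, x (i + S.next) ^ 2 := by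
  have hplaced : ((placedSquares x S.pos 0 S.next).map Box.area).sum =
      ∑ i ∈ Finset.range S.next, x i ^ 2 := by
    rw [placedSquares, Multiset.map_map, Finset.range_eq_Ico]
    simp only [Function.comp_def, Box.area, ← sq]
    rfl
  have harea := S.isDissection.sum_area
  rw [Multiset.map_add, Multiset.sum_add, hplaced, ← hsum.tsum_eq,
    ← hsum.summable.sum_add_tsum_nat_add S.next] at harea
  exact add_left_cancel harea

lemma exists_wide_box (hsum : HasSum (fun i => x i ^ 2) Q.area) (hw : 0 ≤ Q.width)
    (hh : 0 ≤ Q.height) (hδ : δ ≤ 1) (hW : ∀ n, 0 ≤ W * x n)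
    (htail : ∀ n, (W * x n) ^ (1 - δ) * V n < ∑' i, x (i + n) ^ 2) (S : Stage x δ Q V) :
    ∃ R ∈ S.boxes, W * x S.next ≤ min R.width R.height := by
  by_contra! hnarrow
  have hsides := S.isDissection.sides_le hw hh
  refine (htail S.next).not_ge ?_
  calc ∑' i, x (i + S.next) ^ 2 = (S.boxes.map Box.area).sum := (S.sum_area_boxes hsum).symm
    _ ≤ (S.boxes.map fun R => (W * x S.next) ^ (1 - δ) * R.weight δ).sum :=
        Multiset.sum_map_le_sum_map _ _ fun R hR =>
          have hR' := hsides R (Multiset.mem_add.2 (Or.inr hR))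
          Box.area_le_of_min_le hδ hR'.1.1 hR'.2.1 (hnarrow R hR).le
    _ = (W * x S.next) ^ (1 - δ) * (S.boxes.map (Box.weight δ)).sum :=
        Multiset.sum_map_mul_left
    _ ≤ (W * x S.next) ^ (1 - δ) * V S.next :=
        mul_le_mul_of_nonneg_left S.weight_le (Real.rpow_nonneg (hW _) _)

lemma exists_next (S : Stage x δ Q V) {R : Box} (hR : R ∈ S.boxes) {m : ℕ} (hm : S.next < m)
    (hfill : Fillable x δ R.width R.height S.next m (R.weight δ + (V m - V S.next))) :
    ∃ S' : Stage x δ Q V, S.next < S'.next ∧ ∀ i < S.next, S'.pos i = S.pos i := by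
  obtain ⟨L, hL⟩ := Multiset.exists_cons_of_mem hR
  obtain ⟨pos, L', hL', hweight⟩ := hfill.2 R.corner
  have hS := S.isDissection
  have hSw := S.weight_le
  rw [hL] at hS
  rw [hL, Multiset.map_cons, Multiset.sum_cons] at hSw
  refine ⟨⟨m, _, L' + L, hS.append_placedSquares (Nat.zero_le _) hm.le hL', ?_⟩, hm,
    fun i hi => if_pos hi⟩
  rw [Multiset.map_add, Multiset.sum_add]
  linarith

lemma exists_forall_isDissection (start : Stage x δ Q V)
    (hnext : ∀ S : Stage x δ Q V, ∃ S' : Stage x δ Q V,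
      S.next < S'.next ∧ ∀ i < S.next, S'.pos i = S.pos i) :
    ∃ pos : ℕ → ℝ × ℝ, ∀ j, ∃ m ≥ j, ∃ L, Q.IsDissection (placedSquares x pos 0 m + L) := by
  choose f hlt hpos using hnext
  let S : ℕ → Stage x δ Q V := fun j => f^[j] start
  have hS : ∀ j, S (j + 1) = f (S j) := fun j => Function.iterate_succ_apply' f j start
  have hmono : StrictMono fun j => (S j).next := strictMono_nat_of_lt_succ fun j => hS j ▸ hlt _
  have hstable : ∀ j l, j ≤ l → ∀ i < (S j).next, (S l).pos i = (S j).pos i := by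
    intro j l hjl i hi
    induction l, hjl using Nat.le_induction with
    | base => rfl
    | succ l hjl ih => rw [hS, hpos _ i (hi.trans_le (hmono.monotone hjl)), ih]
  refine ⟨fun i => (S (i + 1)).pos i, fun j =>
    ⟨(S j).next, hmono.le_apply, (S j).boxes, ?_⟩⟩
  rw [placedSquares_congr x (pos' := (S j).pos) fun i _ hi => ?_]
  · exact (S j).isDissection
  · obtain hij | hij := le_total (i + 1) j
    · exact (hstable _ _ hij i (hmono.le_apply (x := i + 1))).symm
    · exact hstable _ _ hij i hi

end Stage

lemma subset_and_disjoint_of_forall_isDissection {x : ℕ → ℝ} {Q : Box} {pos : ℕ → ℝ × ℝ}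
    (h : ∀ j, ∃ m ≥ j, ∃ L, Q.IsDissection (placedSquares x pos 0 m + L)) :
    (∀ i, (⟨pos i, x i, x i⟩ : Box).toSet ⊆ Q.toSet) ∧
      Pairwise fun i j =>
        Disjoint (⟨pos i, x i, x i⟩ : Box).toSet (⟨pos j, x j, x j⟩ : Box).toSet := by
  refine ⟨fun i => ?_, fun i j hij => ?_⟩
  · obtain ⟨m, hm, L, hL⟩ := h (i + 1)
    exact hL.toSet_subset (Multiset.mem_add.2 (Or.inl (Multiset.mem_map_of_mem _
      (Multiset.mem_Ico.2 ⟨i.zero_le, hm⟩))))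
  · obtain ⟨m, hm, L, hL⟩ := h (max i j + 1)
    refine hL.disjoint_toSet ((pair_le_placedSquares x pos ?_ ?_ hij).trans (le_add_right le_rfl))
    all_goals omega

/-- By `htail`, at every stage some uncovered box is at least `W * x n` thick. -/
theorem exists_packing_of_fillable {x : ℕ → ℝ} {δ W : ℝ} {Q : Box} {V : ℕ → ℝ}
    (hsum : HasSum (fun i => x i ^ 2) Q.area) (hw : 0 ≤ Q.width) (hh : 0 ≤ Q.height)
    (hδ : δ ≤ 1) (hW : ∀ n, 0 ≤ W * x n)
    (htail : ∀ n, (W * x n) ^ (1 - δ) * V n < ∑' i, x (i + n) ^ 2)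
    (hinit : Q.weight δ ≤ V 0)
    (hfill : ∀ n a b, W * x n ≤ min a b → a ≤ Q.width → b ≤ Q.height →
      ∃ m > n, Fillable x δ a b n m ((⟨0, a, b⟩ : Box).weight δ + (V m - V n))) :
    ∃ pos : ℕ → ℝ × ℝ, (∀ i, (⟨pos i, x i, x i⟩ : Box).toSet ⊆ Q.toSet) ∧
      Pairwise fun i j =>
        Disjoint (⟨pos i, x i, x i⟩ : Box).toSet (⟨pos j, x j, x j⟩ : Box).toSet := by
  let start : Stage x δ Q V :=
    { next := 0
      pos := 0
      boxes := {Q}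
      isDissection := by simpa only [placedSquares_self, zero_add] using .self
      weight_le := by simpa only [Multiset.map_singleton, Multiset.sum_singleton] using hinit }
  obtain ⟨pos, hpos⟩ := start.exists_forall_isDissection fun S => by
    obtain ⟨R, hR, hwide⟩ := S.exists_wide_box hsum hw hh hδ hW htail
    have hRQ := S.isDissection.sides_le hw hh R (Multiset.mem_add.2 (Or.inr hR))
    obtain ⟨m, hm, hRfill⟩ := hfill S.next R.width R.height hwide hRQ.1.2 hRQ.2.2
    exact S.exists_next hR hm hRfill
  exact ⟨pos, subset_and_disjoint_of_forall_isDissection hpos⟩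

namespace Box

lemma measurableSet_toSet (R : Box) : MeasurableSet R.toSet :=
  measurableSet_Ico.prod measurableSet_Ico

lemma toSet_subset_square (c : ℝ × ℝ) (s : ℝ) : (⟨c, s, s⟩ : Box).toSet ⊆ square c s :=
  Set.prod_mono Ico_subset_Icc_self Ico_subset_Icc_self

lemma interior_square_subset_toSet (c : ℝ × ℝ) (s : ℝ) :
    interior (square c s) ⊆ (⟨c, s, s⟩ : Box).toSet := by
  rw [square, interior_prod_eq, interior_Icc, interior_Icc]
  exact Set.prod_mono Ioo_subset_Ico_self Ioo_subset_Ico_self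

lemma closure_toSet (c : ℝ × ℝ) {s : ℝ} (hs : s ≠ 0) :
    closure (⟨c, s, s⟩ : Box).toSet = square c s := by
  rw [toSet, closure_prod_eq, closure_Ico (by simpa using hs),
    closure_Ico (by simpa using hs)]
  rfl

lemma volume_toSet {R : Box} (hw : 0 ≤ R.width) :
    volume R.toSet = ENNReal.ofReal R.area := by
  simp [toSet, area, Measure.volume_eq_prod, Measure.prod_prod, ENNReal.ofReal_mul hw]

end Box

lemma volume_square (c : ℝ × ℝ) {s : ℝ} (hs : 0 ≤ s) :
    volume (square c s) = ENNReal.ofReal (s * s) := by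
  rw [square, Measure.volume_eq_prod, Measure.prod_prod, Real.volume_Icc, Real.volume_Icc,
    add_sub_cancel_left, add_sub_cancel_left, ENNReal.ofReal_mul hs]

lemma perfectlyPacked_of_toSet {ι : Type*} [Countable ι] {c : ℝ × ℝ} {s : ℝ} (hs : 0 ≤ s)
    {pos : ι → ℝ × ℝ} {x : ι → ℝ} (hx : ∀ i, 0 < x i)
    (hsub : ∀ i, (⟨pos i, x i, x i⟩ : Box).toSet ⊆ (⟨c, s, s⟩ : Box).toSet)
    (hdisj : Pairwise fun i j =>
      Disjoint (⟨pos i, x i, x i⟩ : Box).toSet (⟨pos j, x j, x j⟩ : Box).toSet)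
    (hsum : HasSum (fun i => x i ^ 2) (s ^ 2)) :
    PerfectlyPacked (fun i => square (pos i) (x i)) (square c s) := by
  have hsub' : ∀ i, (⟨pos i, x i, x i⟩ : Box).toSet ⊆ square c s := fun i =>
    (hsub i).trans (Box.toSet_subset_square c s)
  have hvol : volume (⋃ i, (⟨pos i, x i, x i⟩ : Box).toSet) = volume (square c s) := by
    rw [measure_iUnion hdisj fun i => Box.measurableSet_toSet _, volume_square c hs, ← sq,
      ← hsum.tsum_eq, ENNReal.ofReal_tsum_of_nonneg (fun i => sq_nonneg _) hsum.summable]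
    exact tsum_congr fun i => by rw [Box.volume_toSet (hx i).le, Box.area, sq]
  refine ⟨fun i => ?_, fun i j hij => ?_, ?_⟩
  · change square (pos i) (x i) ⊆ _
    rw [← Box.closure_toSet _ (hx i).ne']
    exact closure_minimal (hsub' i) (isClosed_Icc.prod isClosed_Icc)
  · exact (hdisj hij).mono (Box.interior_square_subset_toSet _ _)
      (Box.interior_square_subset_toSet _ _)
  · refine measure_mono_null (sdiff_subset_sdiff_right (iUnion_mono fun i =>
      Box.toSet_subset_square (pos i) (x i))) ?_
    rw [measure_sdiff (iUnion_subset hsub')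
      (MeasurableSet.iUnion fun i => Box.measurableSet_toSet _).nullMeasurableSet
      (by simp [hvol, volume_square c hs]), hvol, tsub_self]

section Pointwise

open scoped Pointwise

lemma smul_square {σ : ℝ} (hσ : 0 < σ) (c : ℝ × ℝ) (s : ℝ) :
    σ • square c s = square (σ • c) (σ * s) := by
  simp only [square, Set.smul_set_prod, LinearOrderedField.smul_Icc hσ, Prod.smul_fst,
    Prod.smul_snd, smul_eq_mul, mul_add]

namespace PerfectlyPacked

variable {ι κ : Type*} {S : ι → Set (ℝ × ℝ)} {Ω : Set (ℝ × ℝ)}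

lemma smul {σ : ℝ} (hσ : σ ≠ 0) (h : PerfectlyPacked S Ω) :
    PerfectlyPacked (fun i => σ • S i) (σ • Ω) := by
  obtain ⟨hsub, hdisj, hnull⟩ := h
  refine ⟨fun i => Set.smul_set_mono (hsub i), fun i j hij => ?_, ?_⟩
  · simp only [interior_smul₀ hσ]
    exact (Set.disjoint_image_iff (smul_right_injective _ hσ)).2 (hdisj hij)
  · rw [← Set.smul_set_iUnion, ← Set.smul_set_sdiff₀ hσ, Measure.addHaar_smul, hnull, mul_zero]

lemma comp_equiv (h : PerfectlyPacked S Ω) (e : κ ≃ ι) : PerfectlyPacked (S ∘ e) Ω :=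
  ⟨fun k => h.1 (e k), fun _ _ hkl => h.2.1 (e.injective.ne hkl), by
    simpa only [Function.comp_apply, e.surjective.iUnion_comp S] using h.2.2⟩

end PerfectlyPacked

end Pointwise

section RealPowers

lemma rpow_neg_tangent_le {y z p : ℝ} (hy : 0 < y) (hz : 0 < z) (hp : 0 ≤ p) :
    y ^ (-p) - p * y ^ (-(p + 1)) * (z - y) ≤ z ^ (-p) := by
  have hlog : 1 - p * (z / y - 1) ≤ (z / y) ^ (-p) := by
    rw [Real.rpow_def_of_pos (div_pos hz hy)]
    nlinarith [Real.add_one_le_exp (Real.log (z / y) * -p),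
      Real.log_le_sub_one_of_pos (div_pos hz hy)]
  calc y ^ (-p) - p * y ^ (-(p + 1)) * (z - y) = y ^ (-p) * (1 - p * (z / y - 1)) := by
        rw [neg_add', Real.rpow_sub_one hy.ne']; field_simp
    _ ≤ y ^ (-p) * (z / y) ^ (-p) := by gcongr
    _ = z ^ (-p) := by rw [← Real.mul_rpow hy.le (by positivity), mul_div_cancel₀ _ hy.ne']

lemma rpow_le_tangent {y z κ : ℝ} (hy : 0 < y) (hz : 0 ≤ z) (hκ : 0 ≤ κ) (hκ' : κ ≤ 1) :
    z ^ κ ≤ y ^ κ + κ * y ^ (κ - 1) * (z - y) := by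
  have hneg : -1 ≤ z / y - 1 := by linarith [div_nonneg hz hy.le]
  calc z ^ κ = y ^ κ * (1 + (z / y - 1)) ^ κ := by
        rw [add_sub_cancel, ← Real.mul_rpow hy.le (by positivity), mul_div_cancel₀ _ hy.ne']
    _ ≤ y ^ κ * (1 + κ * (z / y - 1)) := by
        gcongr
        exact rpow_one_add_le_one_add_mul_self hneg hκ hκ'
    _ = y ^ κ + κ * y ^ (κ - 1) * (z - y) := by
        rw [Real.rpow_sub_one hy.ne']; field_simp

lemma mul_rpow_div_two_le_rpow_add_sub {y z κ : ℝ} (hy : 0 < y) (hz : 0 ≤ z) (hzy : z ≤ y)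
    (hκ : 0 ≤ κ) (hκ' : κ ≤ 1) : κ * z * y ^ (κ - 1) / 2 ≤ (y + z) ^ κ - y ^ κ := by
  have hslope : y ^ (κ - 1) / 2 ≤ (y + z) ^ (κ - 1) := by
    calc y ^ (κ - 1) / 2 = 2 ^ (-1 : ℝ) * y ^ (κ - 1) := by rw [Real.rpow_neg_one]; ring
      _ ≤ 2 ^ (κ - 1) * y ^ (κ - 1) := by gcongr <;> linarith
      _ = (2 * y) ^ (κ - 1) := (Real.mul_rpow zero_le_two hy.le).symm
      _ ≤ (y + z) ^ (κ - 1) :=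
        Real.rpow_le_rpow_of_nonpos (by linarith) (by linarith) (by linarith)
  have htangent := rpow_le_tangent (y := y + z) (z := y) (by linarith) hy.le hκ hκ'
  nlinarith [mul_le_mul_of_nonneg_left hslope (mul_nonneg hκ hz)]

lemma hasSum_sub_succ {F : ℕ → ℝ} {l : ℝ} (hF : Antitone F)
    (hlim : Filter.Tendsto F Filter.atTop (nhds l)) :
    HasSum (fun n => F n - F (n + 1)) (F 0 - l) := by
  rw [hasSum_iff_tendsto_nat_of_nonneg fun n => sub_nonneg.2 (hF n.le_succ)]
  simpa only [Finset.sum_range_sub'] using hlim.const_sub (F 0)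

variable {N p : ℝ}

lemma hasSum_add_rpow_neg_sub (hN : 0 < N) (hp : 0 < p) :
    HasSum (fun i : ℕ => ((N + i) ^ (-p) - (N + (i + 1 : ℕ)) ^ (-p)) / p) (N ^ (-p) / p) := by
  have hanti : Antitone fun i : ℕ => (N + i) ^ (-p) := fun i j hij =>
    Real.rpow_le_rpow_of_nonpos (by positivity) (by gcongr) (by linarith)
  have hlim : Filter.Tendsto (fun i : ℕ => (N + i) ^ (-p)) Filter.atTop (nhds 0) :=
    (tendsto_rpow_neg_atTop hp).comp
      (Filter.tendsto_atTop_add_const_left _ _ tendsto_natCast_atTop_atTop)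
  simpa using (hasSum_sub_succ hanti hlim).div_const p

lemma add_one_rpow_neg_le (hN : 0 < N) (hp : 0 < p) :
    (N + 1) ^ (-(p + 1)) ≤ (N ^ (-p) - (N + 1) ^ (-p)) / p := by
  rw [le_div_iff₀ hp]
  linarith [rpow_neg_tangent_le (y := N + 1) (z := N) (by linarith) hN hp.le]

lemma le_rpow_neg_succ (hN : 0 < N) (hp : 0 < p) :
    (N ^ (-p) - (N + 1) ^ (-p)) / p ≤ N ^ (-(p + 1)) := by
  rw [div_le_iff₀ hp]
  linarith [rpow_neg_tangent_le (y := N) (z := N + 1) hN (by linarith) hp.le]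

lemma add_succ_rpow_neg_le (hN : 0 < N) (hp : 0 < p) (i : ℕ) :
    (N + (i + 1 : ℕ)) ^ (-(p + 1)) ≤ ((N + i) ^ (-p) - (N + (i + 1 : ℕ)) ^ (-p)) / p := by
  simpa only [Nat.cast_add_one, add_assoc] using add_one_rpow_neg_le (N := N + i) (by positivity) hp

lemma summable_add_rpow_neg (hN : 0 < N) (hp : 0 < p) :
    Summable fun i : ℕ => (N + i) ^ (-(p + 1)) :=
  (summable_nat_add_iff 1).1 <| .of_nonneg_of_le (fun i => by positivity)
    (add_succ_rpow_neg_le hN hp) (hasSum_add_rpow_neg_sub hN hp).summable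

lemma rpow_neg_div_le_tsum (hN : 0 < N) (hp : 0 < p) :
    N ^ (-p) / p ≤ ∑' i : ℕ, (N + i) ^ (-(p + 1)) :=
  hasSum_le (fun i => by
    simpa only [Nat.cast_add_one, add_assoc] using le_rpow_neg_succ (N := N + i) (by positivity) hp)
    (hasSum_add_rpow_neg_sub hN hp) (summable_add_rpow_neg hN hp).hasSum

lemma tsum_add_rpow_neg_le (hN : 0 < N) (hp : 0 < p) :
    ∑' i : ℕ, (N + i) ^ (-(p + 1)) ≤ N ^ (-(p + 1)) + N ^ (-p) / p := by
  have hsummable := summable_add_rpow_neg hN hp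
  rw [hsummable.tsum_eq_zero_add, Nat.cast_zero, add_zero]
  gcongr
  exact hasSum_le (add_succ_rpow_neg_le hN hp) ((summable_nat_add_iff 1).2 hsummable).hasSum
    (hasSum_add_rpow_neg_sub hN hp)

end RealPowers

section HarmonicSides

variable {t N : ℝ}

/-- The sides of the squares to be packed, scaled by `q ^ t`: with `N = n₀ + r / q`, the square of
index `n₀ + i` has sidelength `q ^ (-t) * side t N i`. -/
noncomputable def side (t N : ℝ) (i : ℕ) : ℝ := (N + i) ^ (-t)

lemma side_pos (hN : 0 < N) (i : ℕ) : 0 < side t N i := by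
  unfold side; positivity

lemma side_antitone (ht : 0 ≤ t) (hN : 0 < N) : Antitone (side t N) := fun i j hij =>
  Real.rpow_le_rpow_of_nonpos (by positivity) (by gcongr) (by linarith)

lemma side_add (i n : ℕ) : side t N (i + n) = side t (N + n) i := by
  rw [side, side, Nat.cast_add, add_assoc, add_comm (n : ℝ)]

lemma side_sq (hN : 0 < N) (i : ℕ) : side t N i ^ 2 = (N + i) ^ (-(2 * t - 1 + 1)) := by
  rw [side, ← Real.rpow_mul_natCast (by positivity)]
  congr 1; push_cast; ring

lemma add_mul_side (hN : 0 < N) (n : ℕ) : (N + n) * side t N n = (N + n) ^ (1 - t) := by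
  rw [side, sub_eq_add_neg, Real.rpow_add (by positivity), Real.rpow_one]

lemma side_rpow_mul_side (hN : 0 < N) (n : ℕ) :
    side t N n ^ (1 - t) * side t N n = (N + n) ^ ((1 - t) ^ 2 - 1) := by
  rw [side, ← Real.rpow_mul (by positivity), ← Real.rpow_add (by positivity)]
  congr 1; ring

lemma one_sub_div_mul_side_le (ht₀ : 0 ≤ t) (ht₁ : t ≤ 1) (hN : 0 < N) (n i : ℕ) :
    (1 - i / (N + n)) * side t N n ≤ side t N (n + i) := by
  have hν : 0 < N + n := by positivity
  have htangent := rpow_neg_tangent_le (y := N + n) (z := N + (n + i : ℕ)) hν (by positivity) ht₀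
  have hslope : t * (i / (N + n) * (N + n) ^ (-t)) ≤ i / (N + n) * (N + n) ^ (-t) :=
    mul_le_of_le_one_left (by positivity) ht₁
  rw [neg_add', Real.rpow_sub_one hν.ne', Nat.cast_add] at htangent
  rw [side, side, Nat.cast_add]
  calc (1 - i / (N + n)) * (N + n) ^ (-t)
      ≤ (N + n) ^ (-t) - t * (i / (N + n) * (N + n) ^ (-t)) := by linarith
    _ = (N + n) ^ (-t) - t * ((N + n) ^ (-t) / (N + n)) * (N + (n + i) - (N + n)) := by ring
    _ ≤ (N + (n + i)) ^ (-t) := htangent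

lemma summable_side_sq (ht : 1 / 2 < t) (hN : 0 < N) : Summable fun i => side t N i ^ 2 := by
  simpa only [side_sq hN] using summable_add_rpow_neg hN (p := 2 * t - 1) (by linarith)

lemma rpow_neg_div_le_tsum_side_sq (ht : 1 / 2 < t) (hN : 0 < N) (n : ℕ) :
    (N + n) ^ (-(2 * t - 1)) / (2 * t - 1) ≤ ∑' i, side t N (i + n) ^ 2 := by
  have hν : 0 < N + n := by positivity
  simpa only [side_add, side_sq hν] using rpow_neg_div_le_tsum hν (p := 2 * t - 1) (by linarith)

lemma tsum_side_sq_le (ht₁ : 1 / 2 < t) (ht₂ : t < 1) (hN : 1 ≤ N) :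
    ∑' i, side t N i ^ 2 ≤ 2 / (2 * t - 1) * N ^ (-(2 * t - 1)) := by
  have hp : 0 < 2 * t - 1 := by linarith
  have hN₀ : 0 < N := by linarith
  have hfirst : N ^ (-(2 * t - 1 + 1)) ≤ N ^ (-(2 * t - 1)) / (2 * t - 1) :=
    (Real.rpow_le_rpow_of_exponent_le hN (by linarith)).trans
      (le_div_self (by positivity) hp (by linarith))
  simp only [side_sq hN₀]
  calc ∑' i : ℕ, (N + i) ^ (-(2 * t - 1 + 1))
      ≤ N ^ (-(2 * t - 1 + 1)) + N ^ (-(2 * t - 1)) / (2 * t - 1) := tsum_add_rpow_neg_le hN₀ hp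
    _ ≤ N ^ (-(2 * t - 1)) / (2 * t - 1) + N ^ (-(2 * t - 1)) / (2 * t - 1) := by gcongr
    _ = 2 / (2 * t - 1) * N ^ (-(2 * t - 1)) := by ring

/-- The number of squares stacked in one column of a slab: `H = columnHeight t` is large enough for
`H + 1 ≤ H ^ (2 - t)` to hold. -/
noncomputable def columnHeight (t : ℝ) : ℕ := ⌈1 / (1 - t)⌉₊

lemma one_div_le_columnHeight (t : ℝ) : 1 / (1 - t) ≤ columnHeight t := Nat.le_ceil _

lemma three_le_columnHeight (ht₁ : 1 / 2 < t) (ht₂ : t < 1) : 3 ≤ columnHeight t :=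
  Nat.lt_ceil.2 <| by rw [lt_div_iff₀ (by linarith)]; push_cast; linarith

lemma columnHeight_le (ht₀ : 0 ≤ t) (ht₁ : t < 1) : columnHeight t ≤ 2 / (1 - t) := by
  have hδ : 0 < 1 - t := by linarith
  have hone : 1 ≤ 1 / (1 - t) := by rw [le_div_iff₀ hδ]; linarith
  calc (columnHeight t : ℝ) ≤ 1 / (1 - t) + 1 := (Nat.ceil_lt_add_one (by positivity)).le
    _ ≤ 1 / (1 - t) + 1 / (1 - t) := by gcongr
    _ = 2 / (1 - t) := by ring

lemma columnHeight_add_one_le (ht₁ : 1 / 2 < t) (ht₂ : t < 1) :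
    (columnHeight t + 1 : ℝ) ≤ columnHeight t * columnHeight t ^ (1 - t) := by
  have hδ : 0 < 1 - t := by linarith
  have hH : (3 : ℝ) ≤ columnHeight t := by exact_mod_cast three_le_columnHeight ht₁ ht₂
  have hHδ : 1 ≤ columnHeight t * (1 - t) := (div_le_iff₀ hδ).1 (one_div_le_columnHeight t)
  have hpow : 1 + (1 - t) ≤ (columnHeight t : ℝ) ^ (1 - t) := by
    calc 1 + (1 - t) ≤ Real.exp (1 - t) := by linarith [Real.add_one_le_exp (1 - t)]
      _ = Real.exp 1 ^ (1 - t) := (Real.exp_one_rpow _).symm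
      _ ≤ columnHeight t ^ (1 - t) := by gcongr; linarith [Real.exp_one_lt_three]
  nlinarith

/-- For the total area `A` of the squares, an upper bound of `√A / (N * side t N 0)`: the number of
squares along an edge of the big square, relative to their starting index. -/
noncomputable def relativeWidth (t N : ℝ) : ℝ := √(2 / ((2 * t - 1) * N))

lemma relativeWidth_sq (ht : 1 / 2 < t) (hN : 0 < N) :
    relativeWidth t N ^ 2 = 2 / ((2 * t - 1) * N) :=
  Real.sq_sqrt (div_nonneg zero_le_two (mul_nonneg (by linarith) hN.le))

lemma one_le_relativeWidth_mul (ht₁ : 1 / 2 < t) (ht₂ : t < 1) (hN : 1 ≤ N) :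
    1 ≤ relativeWidth t N * N := by
  have hp : 0 < 2 * t - 1 := by linarith
  have hN₀ : 0 < N := by linarith
  have hβ : 0 ≤ relativeWidth t N := Real.sqrt_nonneg _
  refine (one_le_sq_iff₀ (by positivity)).1 ?_
  rw [mul_pow, relativeWidth_sq ht₁ hN₀, div_mul_eq_mul_div, one_le_div (by positivity)]
  nlinarith

lemma sqrt_tsum_side_sq_le (ht₁ : 1 / 2 < t) (ht₂ : t < 1) (hN : 1 ≤ N) (n : ℕ) :
    √(∑' i, side t N i ^ 2) ≤ relativeWidth t N * ((N + n) * side t N n) := by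
  have hN₀ : 0 < N := by linarith
  have hβ : 0 ≤ relativeWidth t N := Real.sqrt_nonneg _
  have harea : ∑' i, side t N i ^ 2 ≤ (relativeWidth t N * N ^ (1 - t)) ^ 2 := by
    refine (tsum_side_sq_le ht₁ ht₂ hN).trans_eq ?_
    rw [mul_pow, relativeWidth_sq ht₁ hN₀, ← Real.rpow_mul_natCast hN₀.le,
      show (1 - t) * (2 : ℕ) = -(2 * t - 1) + 1 by push_cast; ring, Real.rpow_add_one hN₀.ne']
    field_simp
  calc √(∑' i, side t N i ^ 2) ≤ relativeWidth t N * N ^ (1 - t) :=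
        Real.sqrt_le_iff.2 ⟨by positivity, harea⟩
    _ ≤ relativeWidth t N * (N + n) ^ (1 - t) := by
        gcongr
        linarith [n.cast_nonneg (α := ℝ)]
    _ = relativeWidth t N * ((N + n) * side t N n) := by rw [add_mul_side hN₀]

/-- A bound for the relative decrease of the sides among the squares used in one slab. -/
noncomputable def slabVariation (t N : ℝ) : ℝ := 3 * relativeWidth t N * columnHeight t

lemma slabVariation_nonneg (t N : ℝ) : 0 ≤ slabVariation t N := by
  unfold slabVariation relativeWidth; positivity

lemma sq_columnHeight_mul_slabVariation_le (ht₁ : 1 / 2 < t) (ht₂ : t < 1) (hN : 0 < N) :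
    (columnHeight t * slabVariation t N) ^ 2 ≤ 288 / (1 - t) ^ 4 / ((2 * t - 1) * N) := by
  have hp : 0 < 2 * t - 1 := by linarith
  have hH := columnHeight_le (by linarith) ht₂
  calc (columnHeight t * slabVariation t N) ^ 2
      = 9 * columnHeight t ^ 4 * relativeWidth t N ^ 2 := by unfold slabVariation; ring
    _ = 9 * columnHeight t ^ 4 * (2 / ((2 * t - 1) * N)) := by rw [relativeWidth_sq ht₁ hN]
    _ ≤ 9 * (2 / (1 - t)) ^ 4 * (2 / ((2 * t - 1) * N)) := by gcongr
    _ = 288 / (1 - t) ^ 4 / ((2 * t - 1) * N) := by rw [div_pow]; ring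

lemma le_rpow_half_of_rpow_le {δ x y : ℝ} (hδ : 0 < δ) (hx : 0 ≤ x) (h : x ^ (2 / δ) ≤ y) :
    x ≤ y ^ (δ / 2) := by
  calc x = (x ^ (2 / δ)) ^ (δ / 2) := by
        rw [← Real.rpow_mul hx, show 2 / δ * (δ / 2) = 1 by field_simp, Real.rpow_one]
    _ ≤ y ^ (δ / 2) := by gcongr

lemma sq_mul_columnHeight_le (ht₁ : 1 / 2 < t) (ht₂ : t < 1)
    (hN_large : (100 / (1 - t) ^ 4) ^ (2 / (1 - t)) ≤ N) : (64 * (columnHeight t : ℝ)) ^ 2 ≤ N := by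
  have hδ : 0 < 1 - t := by linarith
  have hH := columnHeight_le (by linarith) ht₂
  have hcube : (1 - t) ^ 3 ≤ (1 / 2) ^ 3 := by gcongr; linarith
  have hbase : 64 * (2 / (1 - t)) ≤ 100 / (1 - t) ^ 4 := by
    rw [← mul_div_assoc, div_le_div_iff₀ hδ (by positivity)]; nlinarith
  have hone : 1 ≤ 100 / (1 - t) ^ 4 := by
    have : 1 ≤ 64 * (2 / (1 - t)) := by rw [← mul_div_assoc, le_div_iff₀ hδ]; linarith
    linarith
  calc (64 * (columnHeight t : ℝ)) ^ 2 ≤ (64 * (2 / (1 - t))) ^ 2 := by gcongr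
    _ ≤ (100 / (1 - t) ^ 4) ^ 2 := by gcongr
    _ = (100 / (1 - t) ^ 4) ^ (2 : ℝ) := (Real.rpow_two _).symm
    _ ≤ (100 / (1 - t) ^ 4) ^ (2 / (1 - t)) :=
        Real.rpow_le_rpow_of_exponent_le hone (by rw [le_div_iff₀ hδ]; linarith)
    _ ≤ N := hN_large

lemma one_le_of_rpow_le (ht₁ : 1 / 2 < t) (ht₂ : t < 1)
    (hN_large : (100 / (1 - t) ^ 4) ^ (2 / (1 - t)) ≤ N) : 1 ≤ N := by
  have hH : (3 : ℝ) ≤ columnHeight t := by exact_mod_cast three_le_columnHeight ht₁ ht₂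
  nlinarith [sq_mul_columnHeight_le ht₁ ht₂ hN_large]

lemma columnHeight_mul_slabVariation_le_one (ht₁ : 1 / 2 < t) (ht₂ : t < 1) (hN : 0 < N)
    (hN_gap : 300 / (1 - t) ^ 4 ≤ (2 * t - 1) * N) : columnHeight t * slabVariation t N ≤ 1 := by
  have hp : 0 < 2 * t - 1 := by linarith
  have : 0 < 1 - t := by linarith
  refine (sq_le_one_iff₀ (mul_nonneg (Nat.cast_nonneg _) (slabVariation_nonneg t N))).1 ?_
  refine (sq_columnHeight_mul_slabVariation_le ht₁ ht₂ hN).trans ?_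
  rw [div_le_one (by positivity)]
  refine le_trans ?_ hN_gap
  gcongr; norm_num

lemma mul_slabVariation_rpow_le (ht₁ : 1 / 2 < t) (ht₂ : t < 1)
    (hN_large : (100 / (1 - t) ^ 4) ^ (2 / (1 - t)) ≤ N) :
    16 * (2 * t - 1) * (columnHeight t * slabVariation t N) ^ (1 - t) ≤ (1 - t) ^ 3 := by
  set δ := 1 - t
  have hp : 0 < 2 * t - 1 := by linarith
  have hδ : 0 < δ := by linarith
  have : δ ≤ 1 / 2 := by linarith
  have hN : 0 < N := by linarith [one_le_of_rpow_le ht₁ ht₂ hN_large]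
  have hθ := slabVariation_nonneg t N
  have hNδ : 100 / δ ^ 4 ≤ N ^ (δ / 2) := le_rpow_half_of_rpow_le hδ (by positivity) hN_large
  have hconst : (288 / δ ^ 4) ^ (δ / 2) ≤ 5 / δ := by
    have hbase : 288 / δ ^ 4 ≤ (5 / δ) ^ 4 := by rw [div_pow]; gcongr; norm_num
    calc (288 / δ ^ 4) ^ (δ / 2) ≤ ((5 / δ) ^ 4) ^ (δ / 2) := by gcongr
      _ = (5 / δ) ^ (4 * (δ / 2)) := by
          rw [← Real.rpow_natCast, ← Real.rpow_mul (by positivity)]; norm_num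
      _ ≤ 5 / δ := Real.rpow_le_self_of_one_le
          (by rw [le_div_iff₀ hδ]; linarith) (by linarith)
  have hgap : 2 * t - 1 ≤ (2 * t - 1) ^ (δ / 2) :=
    Real.self_le_rpow_of_le_one hp.le (by linarith) (by linarith)
  have hpow : (columnHeight t * slabVariation t N) ^ δ ≤
      5 / δ / ((2 * t - 1) * (100 / δ ^ 4)) := by
    calc (columnHeight t * slabVariation t N) ^ δ
        = ((columnHeight t * slabVariation t N) ^ 2) ^ (δ / 2) := by
          rw [← Real.rpow_natCast, ← Real.rpow_mul (by positivity)]; congr 1; push_cast; ring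
      _ ≤ (288 / δ ^ 4 / ((2 * t - 1) * N)) ^ (δ / 2) := by
          gcongr; exact sq_columnHeight_mul_slabVariation_le ht₁ ht₂ hN
      _ = (288 / δ ^ 4) ^ (δ / 2) / ((2 * t - 1) ^ (δ / 2) * N ^ (δ / 2)) := by
          rw [Real.div_rpow (by positivity) (by positivity), Real.mul_rpow hp.le hN.le]
      _ ≤ 5 / δ / ((2 * t - 1) * (100 / δ ^ 4)) := by gcongr
  calc 16 * (2 * t - 1) * (columnHeight t * slabVariation t N) ^ δ
      ≤ 16 * (2 * t - 1) * (5 / δ / ((2 * t - 1) * (100 / δ ^ 4))) := by gcongr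
    _ = 4 / 5 * δ ^ 3 := by field_simp; norm_num
    _ ≤ δ ^ 3 := by linarith [pow_pos hδ 3]

/-- The total weight which the regions left uncovered may have before the `n`-th square is placed:
it grows with `n` like `(N + n) ^ ((1 - t) ^ 2)`. -/
noncomputable def weightBudget (t N : ℝ) (n : ℕ) : ℝ :=
  columnHeight t ^ (-t) / (2 * (2 * t - 1)) * (N + n) ^ ((1 - t) ^ 2)

lemma rpow_mul_weightBudget_lt (ht₁ : 1 / 2 < t) (ht₂ : t < 1) (hN : 0 < N) (n : ℕ) :
    (columnHeight t * side t N n) ^ (1 - (1 - t)) * weightBudget t N n <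
      ∑' i, side t N (i + n) ^ 2 := by
  have hp : 0 < 2 * t - 1 := by linarith
  have hH : (0 : ℝ) < columnHeight t := by
    exact_mod_cast (three_le_columnHeight ht₁ ht₂).trans_lt' zero_lt_three
  have hν : 0 < N + n := by positivity
  refine lt_of_eq_of_lt ?_ ((half_lt_self (by positivity)).trans_le
    (rpow_neg_div_le_tsum_side_sq ht₁ hN n))
  have hexp : (N + n) ^ (-(2 * t - 1)) = ((N + n) ^ (-t)) ^ t * (N + n) ^ ((1 - t) ^ 2) := by
    rw [← Real.rpow_mul hν.le, ← Real.rpow_add hν]; congr 1; ring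
  rw [sub_sub_cancel, Real.mul_rpow hH.le (side_pos hN n).le, weightBudget, side, hexp,
    Real.rpow_neg hH.le]
  field_simp

lemma eight_mul_columnHeight_rpow_le (ht₁ : 1 / 2 < t) (ht₂ : t < 1)
    (hN_large : (100 / (1 - t) ^ 4) ^ (2 / (1 - t)) ≤ N) :
    8 * (columnHeight t : ℝ) ^ t ≤ N ^ (t / 2) := by
  calc 8 * (columnHeight t : ℝ) ^ t = 64 ^ (1 / 2 : ℝ) * columnHeight t ^ t := by
        rw [show (64 : ℝ) = 8 ^ (2 : ℝ) by norm_num, ← Real.rpow_mul (by norm_num)]; norm_num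
    _ ≤ 64 ^ t * columnHeight t ^ t := by gcongr; norm_num
    _ = ((64 * columnHeight t) ^ 2) ^ (t / 2) := by
        rw [← Real.mul_rpow (by norm_num) (Nat.cast_nonneg _), ← Real.rpow_natCast,
          ← Real.rpow_mul (by positivity)]
        congr 1; push_cast; ring
    _ ≤ N ^ (t / 2) := by gcongr; exact sq_mul_columnHeight_le ht₁ ht₂ hN_large

lemma weight_square_le_weightBudget (ht₁ : 1 / 2 < t) (ht₂ : t < 1)
    (hN_large : (100 / (1 - t) ^ 4) ^ (2 / (1 - t)) ≤ N) {s : ℝ} (hs : 0 ≤ s)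
    (hsN : s ^ 2 ≤ 2 / (2 * t - 1) * N ^ (-(2 * t - 1))) (c : ℝ × ℝ) :
    (⟨c, s, s⟩ : Box).weight (1 - t) ≤ weightBudget t N 0 := by
  have hp : 0 < 2 * t - 1 := by linarith
  have hN : 0 < N := by linarith [one_le_of_rpow_le ht₁ ht₂ hN_large]
  have hH : (0 : ℝ) < columnHeight t := by
    exact_mod_cast (three_le_columnHeight ht₁ ht₂).trans_lt' zero_lt_three
  have hconst : (2 / (2 * t - 1)) ^ ((2 - t) / 2) ≤ 2 / (2 * t - 1) :=
    Real.rpow_le_self_of_one_le (by rw [le_div_iff₀ hp]; linarith) (by linarith)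
  have hexp : (N ^ (-(2 * t - 1))) ^ ((2 - t) / 2) * N ^ (t / 2) = N ^ ((1 - t) ^ 2) := by
    rw [← Real.rpow_mul hN.le, ← Real.rpow_add hN]; congr 1; ring
  calc (⟨c, s, s⟩ : Box).weight (1 - t) = 2 * (s ^ 2) ^ ((2 - t) / 2) := by
        rw [Box.weight, min_self, ← Real.rpow_natCast, ← Real.rpow_mul hs,
          show ((2 : ℕ) : ℝ) * ((2 - t) / 2) = 1 - t + 1 by push_cast; ring,
          Real.rpow_add_one' hs (by linarith)]
        ring
    _ ≤ 2 * (2 / (2 * t - 1) * N ^ (-(2 * t - 1))) ^ ((2 - t) / 2) := by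
        gcongr; linarith
    _ = 2 * ((2 / (2 * t - 1)) ^ ((2 - t) / 2) * (N ^ (-(2 * t - 1))) ^ ((2 - t) / 2)) := by
        rw [Real.mul_rpow (by positivity) (by positivity)]
    _ ≤ 2 * (2 / (2 * t - 1) * (N ^ (-(2 * t - 1))) ^ ((2 - t) / 2)) := by gcongr
    _ = columnHeight t ^ (-t) / (2 * (2 * t - 1)) *
          ((N ^ (-(2 * t - 1))) ^ ((2 - t) / 2) * (8 * columnHeight t ^ t)) := by
        rw [Real.rpow_neg hH.le]; field_simp; norm_num
    _ ≤ columnHeight t ^ (-t) / (2 * (2 * t - 1)) *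
          ((N ^ (-(2 * t - 1))) ^ ((2 - t) / 2) * N ^ (t / 2)) := by
        gcongr
        exact eight_mul_columnHeight_rpow_le ht₁ ht₂ hN_large
    _ = weightBudget t N 0 := by rw [hexp, weightBudget, Nat.cast_zero, add_zero]

lemma add_two_mul_rpow_le (ht₁ : 1 / 2 < t) (ht₂ : t < 1)
    (hN_large : (100 / (1 - t) ^ 4) ^ (2 / (1 - t)) ≤ N) :
    (columnHeight t + 2) * (columnHeight t * slabVariation t N) ^ (1 - t) ≤
      columnHeight t ^ (-t) / (2 * (2 * t - 1)) * ((1 - t) ^ 2 * columnHeight t / 2) := by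
  have hp : 0 < 2 * t - 1 := by linarith
  have hδ : 0 < 1 - t := by linarith
  have hH : (3 : ℝ) ≤ columnHeight t := by exact_mod_cast three_le_columnHeight ht₁ ht₂
  have hθ₀ := slabVariation_nonneg t N
  have hinv : (1 - t) / 2 ≤ (columnHeight t : ℝ) ^ (-t) := by
    calc (1 - t) / 2 = (2 / (1 - t))⁻¹ := (inv_div _ _).symm
      _ ≤ (columnHeight t : ℝ)⁻¹ := by gcongr; exact columnHeight_le (by linarith) ht₂
      _ = (columnHeight t : ℝ) ^ (-1 : ℝ) := (Real.rpow_neg_one _).symm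
      _ ≤ (columnHeight t : ℝ) ^ (-t) :=
          Real.rpow_le_rpow_of_exponent_le (by linarith) (by linarith)
  have hvar : (columnHeight t * slabVariation t N) ^ (1 - t) ≤
      (1 - t) ^ 3 / (16 * (2 * t - 1)) := by
    rw [le_div_iff₀' (by positivity)]
    exact mul_slabVariation_rpow_le ht₁ ht₂ hN_large
  calc (columnHeight t + 2) * (columnHeight t * slabVariation t N) ^ (1 - t)
      ≤ (2 * columnHeight t) * ((1 - t) ^ 3 / (16 * (2 * t - 1))) := by gcongr; linarith
    _ = (1 - t) / 2 / (2 * (2 * t - 1)) * ((1 - t) ^ 2 * columnHeight t / 2) := by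
        field_simp; norm_num
    _ ≤ columnHeight t ^ (-t) / (2 * (2 * t - 1)) * ((1 - t) ^ 2 * columnHeight t / 2) := by
        gcongr

lemma mul_waste_le_weightBudget_sub (ht₁ : 1 / 2 < t) (ht₂ : t < 1)
    (hN_large : (100 / (1 - t) ^ 4) ^ (2 / (1 - t)) ≤ N) {n k : ℕ}
    (hk : (k * columnHeight t : ℝ) ≤ N + n) :
    k * ((columnHeight t + 2) *
        (columnHeight t * slabVariation t N * side t N n) ^ (1 - t) * side t N n) ≤
      weightBudget t N (n + k * columnHeight t) - weightBudget t N n := by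
  have hN : 0 < N := by linarith [one_le_of_rpow_le ht₁ ht₂ hN_large]
  have hp : 0 < 2 * t - 1 := by linarith
  have hθ := slabVariation_nonneg t N
  have hgrowth := mul_rpow_div_two_le_rpow_add_sub (y := N + n) (z := k * columnHeight t)
    (κ := (1 - t) ^ 2) (by positivity) (by positivity) hk (by positivity) (by nlinarith)
  calc k * ((columnHeight t + 2) *
        (columnHeight t * slabVariation t N * side t N n) ^ (1 - t) * side t N n)
      = k * ((columnHeight t + 2) * (columnHeight t * slabVariation t N) ^ (1 - t) *
          (side t N n ^ (1 - t) * side t N n)) := by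
        rw [Real.mul_rpow (by positivity) (side_pos hN n).le]; ring
    _ ≤ k * (columnHeight t ^ (-t) / (2 * (2 * t - 1)) * ((1 - t) ^ 2 * columnHeight t / 2) *
          (N + n) ^ ((1 - t) ^ 2 - 1)) := by
        rw [side_rpow_mul_side hN]
        gcongr k * (?_ * _)
        exact add_two_mul_rpow_le ht₁ ht₂ hN_large
    _ = columnHeight t ^ (-t) / (2 * (2 * t - 1)) *
          ((1 - t) ^ 2 * (k * columnHeight t) * (N + n) ^ ((1 - t) ^ 2 - 1) / 2) := by ring
    _ ≤ columnHeight t ^ (-t) / (2 * (2 * t - 1)) *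
          ((N + n + k * columnHeight t) ^ ((1 - t) ^ 2) - (N + n) ^ ((1 - t) ^ 2)) := by gcongr
    _ = weightBudget t N (n + k * columnHeight t) - weightBudget t N n := by
        simp only [weightBudget, Nat.cast_add, Nat.cast_mul, mul_sub, add_assoc]

lemma one_sub_slabVariation_mul_side_le (ht₁ : 1 / 2 < t) (ht₂ : t < 1) (hN : 1 ≤ N) {n i : ℕ}
    {a : ℝ} (ha : a ≤ relativeWidth t N * ((N + n) * side t N n))
    (hi : i * side t N n ≤ (2 * a + side t N n) * columnHeight t) :
    (1 - slabVariation t N) * side t N n ≤ side t N (n + i) := by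
  have hN₀ : 0 < N := by linarith
  have hx : 0 < side t N n := side_pos hN₀ n
  have hβν : 1 ≤ relativeWidth t N * (N + n) := by
    have : 0 ≤ relativeWidth t N * n := mul_nonneg (Real.sqrt_nonneg _) n.cast_nonneg
    linarith [one_le_relativeWidth_mul ht₁ ht₂ hN]
  have hindex : (i : ℝ) ≤ slabVariation t N * (N + n) := by
    refine le_of_mul_le_mul_right (hi.trans ?_) hx
    calc (2 * a + side t N n) * columnHeight t
        ≤ (2 * (relativeWidth t N * ((N + n) * side t N n)) +
            relativeWidth t N * (N + n) * side t N n) * columnHeight t := by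
          gcongr
          exact le_mul_of_one_le_left hx.le hβν
      _ = slabVariation t N * (N + n) * side t N n := by unfold slabVariation; ring
  refine le_trans ?_ (one_sub_div_mul_side_le (by linarith) ht₂.le hN₀ n i)
  gcongr
  rwa [div_le_iff₀ (by positivity)]

lemma mul_columnHeight_le (ht₁ : 1 / 2 < t) (ht₂ : t < 1) (hN : 0 < N)
    (hN_gap : 300 / (1 - t) ^ 4 ≤ (2 * t - 1) * N) {n k : ℕ} {a : ℝ}
    (ha : a ≤ relativeWidth t N * ((N + n) * side t N n)) (hk : k * side t N n ≤ 2 * a) :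
    (k * columnHeight t : ℝ) ≤ N + n := by
  have hH : (3 : ℝ) ≤ columnHeight t := by exact_mod_cast three_le_columnHeight ht₁ ht₂
  have hθ := slabVariation_nonneg t N
  have hk' : (k : ℝ) ≤ 2 * (relativeWidth t N * (N + n)) :=
    le_of_mul_le_mul_right (by linarith) (side_pos (t := t) hN n)
  have hβH : 2 * (relativeWidth t N * columnHeight t) ≤ 1 := by
    calc 2 * (relativeWidth t N * columnHeight t) ≤ columnHeight t * slabVariation t N := by
          unfold slabVariation at *; nlinarith
      _ ≤ 1 := columnHeight_mul_slabVariation_le_one ht₁ ht₂ hN hN_gap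
  calc (k * columnHeight t : ℝ) ≤ 2 * (relativeWidth t N * (N + n)) * columnHeight t := by gcongr
    _ = 2 * (relativeWidth t N * columnHeight t) * (N + n) := by ring
    _ ≤ N + n := mul_le_of_le_one_left (by positivity) hβH

lemma exists_fillable_side (ht₁ : 1 / 2 < t) (ht₂ : t < 1)
    (hN_gap : 300 / (1 - t) ^ 4 ≤ (2 * t - 1) * N)
    (hN_large : (100 / (1 - t) ^ 4) ^ (2 / (1 - t)) ≤ N) {n : ℕ} {a b : ℝ}
    (hwide : columnHeight t * side t N n ≤ min a b)
    (hnarrow : min a b ≤ relativeWidth t N * ((N + n) * side t N n)) :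
    ∃ m > n, Fillable (side t N) (1 - t) a b n m
      ((⟨0, a, b⟩ : Box).weight (1 - t) + (weightBudget t N m - weightBudget t N n)) := by
  have hN₁ : 1 ≤ N := one_le_of_rpow_le ht₁ ht₂ hN_large
  have hN : 0 < N := by linarith
  have hH : 3 ≤ columnHeight t := three_le_columnHeight ht₁ ht₂
  obtain ⟨k, hk₀, hk, hfill⟩ := Fillable.exists_of_wide (sub_nonneg.2 ht₂.le) (side_pos hN)
    (side_antitone (by linarith) hN) (by omega) (columnHeight_add_one_le ht₁ ht₂)
    (slabVariation_nonneg t N)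
    (columnHeight_mul_slabVariation_le_one ht₁ ht₂ hN hN_gap)
    (fun i => one_sub_slabVariation_mul_side_le ht₁ ht₂ hN₁ hnarrow) hwide
  have hkν := mul_columnHeight_le ht₁ ht₂ hN hN_gap hnarrow hk
  exact ⟨n + k * columnHeight t, by simp only [gt_iff_lt, lt_add_iff_pos_right]; positivity,
    hfill.mono (by gcongr; exact mul_waste_le_weightBudget_sub ht₁ ht₂ hN_large hkν)⟩

theorem exists_perfectlyPacked_side (ht₁ : 1 / 2 < t) (ht₂ : t < 1)
    (hN_gap : 300 / (1 - t) ^ 4 ≤ (2 * t - 1) * N)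
    (hN_large : (100 / (1 - t) ^ 4) ^ (2 / (1 - t)) ≤ N) :
    ∃ pos : ℕ → ℝ × ℝ, PerfectlyPacked (fun i => square (pos i) (side t N i))
      (square 0 √(∑' i, side t N i ^ 2)) := by
  have hN₁ : 1 ≤ N := one_le_of_rpow_le ht₁ ht₂ hN_large
  have hN : 0 < N := by linarith
  set s := √(∑' i, side t N i ^ 2)
  have hs₀ : 0 ≤ s := Real.sqrt_nonneg _
  have hs_sq : s ^ 2 = ∑' i, side t N i ^ 2 := Real.sq_sqrt (tsum_nonneg fun i => sq_nonneg _)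
  have hsum : HasSum (fun i => side t N i ^ 2) (s ^ 2) :=
    hs_sq ▸ (summable_side_sq ht₁ hN).hasSum
  obtain ⟨pos, hsub, hdisj⟩ := exists_packing_of_fillable (Q := ⟨0, s, s⟩)
    (by simpa only [Box.area, ← sq] using hsum) hs₀ hs₀ (by linarith)
    (fun n => mul_nonneg (Nat.cast_nonneg _) (side_pos hN n).le)
    (rpow_mul_weightBudget_lt ht₁ ht₂ hN)
    (weight_square_le_weightBudget ht₁ ht₂ hN_large hs₀ (hs_sq ▸ tsum_side_sq_le ht₁ ht₂ hN₁) 0)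
    fun n a b hwide ha _ => exists_fillable_side ht₁ ht₂ hN_gap hN_large hwide
      ((min_le_left a b).trans (ha.trans (sqrt_tsum_side_sq_le ht₁ ht₂ hN₁ n)))
  exact ⟨pos, perfectlyPacked_of_toSet hs₀ (side_pos hN) hsub hdisj hsum⟩

end HarmonicSides

/-- The enumeration `i ↦ n₀ + i` of the natural numbers from `n₀` on. -/
def natTailEquiv (n₀ : ℕ) : ℕ ≃ {n : ℕ // n₀ ≤ n} where
  toFun i := ⟨n₀ + i, n₀.le_add_right i⟩
  invFun n := n - n₀
  left_inv _ := n₀.add_sub_cancel_left _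
  right_inv n := Subtype.ext (Nat.add_sub_cancel' n.2)

lemma natTailEquiv_symm_cast {n₀ : ℕ} (n : {n : ℕ // n₀ ≤ n}) :
    (((natTailEquiv n₀).symm n : ℕ) : ℝ) = n - n₀ := Nat.cast_sub n.2

theorem perfect_packing_AP_harmonic_general {t q r : ℝ} (ht₁ : 1 / 2 < t) (ht₂ : t < 1)
    (hq : 0 < q) (n₀ : ℕ) (hN_gap : 300 / (1 - t) ^ 4 ≤ (2 * t - 1) * (n₀ + r / q))
    (hN_large : (100 / (1 - t) ^ 4) ^ (2 / (1 - t)) ≤ n₀ + r / q) :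
    ∃ (c : ℝ × ℝ) (pos : {n : ℕ // n₀ ≤ n} → ℝ × ℝ),
      PerfectlyPacked
        (fun n : {n : ℕ // n₀ ≤ n} => square (pos n) ((q * ((n : ℕ) : ℝ) + r) ^ (-t)))
        (square c
          √(∑' n : {n : ℕ // n₀ ≤ n}, (q * ((n : ℕ) : ℝ) + r) ^ (-(2 * t)))) := by
  set N := n₀ + r / q with hN_def
  have hN : 0 < N := by linarith [one_le_of_rpow_le ht₁ ht₂ hN_large]
  set e := (natTailEquiv n₀).symm with he
  have hσ : 0 < q ^ (-t) := by positivity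
  have hterm (n : {n : ℕ // n₀ ≤ n}) : q * ((n : ℕ) : ℝ) + r = q * (N + e n) := by
    rw [hN_def, he, natTailEquiv_symm_cast]; field_simp; ring
  have hside (n : {n : ℕ // n₀ ≤ n}) :
      (q * ((n : ℕ) : ℝ) + r) ^ (-t) = q ^ (-t) * side t N (e n) := by
    rw [hterm, Real.mul_rpow hq.le (by positivity), side]
  have hsq (n : {n : ℕ // n₀ ≤ n}) :
      (q * ((n : ℕ) : ℝ) + r) ^ (-(2 * t)) = (q ^ (-t)) ^ 2 * side t N (e n) ^ 2 := by
    rw [← mul_pow, ← hside, hterm, ← Real.rpow_mul_natCast (by positivity)]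
    congr 1; push_cast; ring
  obtain ⟨pos, hpos⟩ := exists_perfectlyPacked_side ht₁ ht₂ hN_gap hN_large
  refine ⟨q ^ (-t) • 0, fun n => q ^ (-t) • pos (e n), ?_⟩
  simp only [hsq, hside]
  rw [tsum_mul_left, e.tsum_eq (fun i => side t N i ^ 2), Real.sqrt_mul (sq_nonneg _),
    Real.sqrt_sq hσ.le, ← smul_square hσ]
  simpa only [Function.comp_def, smul_square hσ] using (hpos.smul hσ.ne').comp_equiv e

section Thresholds

variable {t M : ℝ}

lemma fifty_le_rpow_half (ht₁ : 1 / 2 < t) (ht₂ : t < 1)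
    (hM : (50 * ((11 : ℝ) / 10) ^ (t * (2 - t))) ^ (2 / (1 - t)) ≤ M) :
    50 ≤ M ^ ((1 - t) / 2) := by
  have hone : 1 ≤ ((11 : ℝ) / 10) ^ (t * (2 - t)) :=
    Real.one_le_rpow (by norm_num) (by nlinarith)
  calc (50 : ℝ) ≤ 50 * (11 / 10) ^ (t * (2 - t)) := by linarith
    _ ≤ M ^ ((1 - t) / 2) := le_rpow_half_of_rpow_le (by linarith) (by positivity) hM

lemma inv_sq_le_rpow_half (ht₁ : 1 / 2 < t) (ht₂ : t < 1) (h50 : 50 ≤ M ^ ((1 - t) / 2))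
    (hM : (4 : ℝ) ^ ((1 : ℝ) / (1 - t)) *
      (2 * (2 * t - 1) / (1 - t) ^ 2) ^ (2 / (t * (1 - t))) ≤ M) :
    ((1 - t) ^ 2)⁻¹ ≤ M ^ ((1 - t) / 2) := by
  have hδ : 0 < 1 - t := by linarith
  have hp : 0 < 2 * t - 1 := by linarith
  rcases le_total (3 / 4) t with ht | ht
  · refine le_rpow_half_of_rpow_le hδ (by positivity) (le_trans ?_ hM)
    have hone : 1 ≤ ((1 - t) ^ 2)⁻¹ := (one_le_inv₀ (by positivity)).2 (by nlinarith)
    calc ((1 - t) ^ 2)⁻¹ ^ (2 / (1 - t)) ≤ ((1 - t) ^ 2)⁻¹ ^ (2 / (t * (1 - t))) := by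
          refine Real.rpow_le_rpow_of_exponent_le hone ?_
          gcongr
          exact mul_le_of_le_one_left hδ.le ht₂.le
      _ ≤ (2 * (2 * t - 1) / (1 - t) ^ 2) ^ (2 / (t * (1 - t))) := by
          rw [inv_eq_one_div]
          gcongr
          linarith
      _ ≤ 4 ^ (1 / (1 - t)) * (2 * (2 * t - 1) / (1 - t) ^ 2) ^ (2 / (t * (1 - t))) :=
          le_mul_of_one_le_left (by positivity) (Real.one_le_rpow (by norm_num) (by positivity))
  · refine (inv_le_of_inv_le₀ (by norm_num) ?_).trans h50
    nlinarith

lemma div_pow_four_le (h50 : 50 ≤ M ^ ((1 - t) / 2))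
    (hinv : ((1 - t) ^ 2)⁻¹ ≤ M ^ ((1 - t) / 2)) :
    2500 / (1 - t) ^ 4 ≤ (M ^ ((1 - t) / 2)) ^ 4 := by
  calc 2500 / (1 - t) ^ 4 = 50 ^ 2 * ((1 - t) ^ 2)⁻¹ ^ 2 := by
        rw [inv_pow, ← pow_mul, div_eq_mul_inv]; norm_num
    _ ≤ (M ^ ((1 - t) / 2)) ^ 2 * (M ^ ((1 - t) / 2)) ^ 2 := by
        have : 0 ≤ ((1 - t) ^ 2)⁻¹ := by positivity
        gcongr
    _ = (M ^ ((1 - t) / 2)) ^ 4 := by ring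

lemma div_pow_four_rpow_le (ht₂ : t < 1) (hM : 0 ≤ M)
    (h50 : 50 ≤ M ^ ((1 - t) / 2)) (hinv : ((1 - t) ^ 2)⁻¹ ≤ M ^ ((1 - t) / 2)) :
    (100 / (1 - t) ^ 4) ^ (2 / (1 - t)) ≤ 4752 * M ^ 4 := by
  have hδ : 0 < 1 - t := by linarith
  calc (100 / (1 - t) ^ 4) ^ (2 / (1 - t)) ≤ (2500 / (1 - t) ^ 4) ^ (2 / (1 - t)) := by
        gcongr; norm_num
    _ ≤ ((M ^ ((1 - t) / 2)) ^ 4) ^ (2 / (1 - t)) := by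
        gcongr; exact div_pow_four_le h50 hinv
    _ = M ^ 4 := by
        rw [← Real.rpow_natCast, ← Real.rpow_mul hM, ← Real.rpow_mul hM, ← Real.rpow_natCast]
        congr 1; field_simp
    _ ≤ 4752 * M ^ 4 := by linarith [pow_nonneg hM 4]

lemma rpow_mul_pow_four_le {q κ a : ℝ} (hq : 0 < q) (hκ₀ : 0 < κ) (hκ₁ : κ ≤ 1) (ha₀ : 0 ≤ a)
    (ha₄ : a ≤ 4) : q ^ a * κ ^ 4 ≤ (2 * q * κ) ^ a := by
  calc q ^ a * κ ^ 4 ≤ q ^ a * κ ^ a := by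
        rw [← Real.rpow_natCast]
        gcongr 1
        exact Real.rpow_le_rpow_of_exponent_ge hκ₀ hκ₁ (by exact_mod_cast ha₄)
    _ = (q * κ) ^ a := (Real.mul_rpow hq.le hκ₀.le).symm
    _ ≤ (2 * q * κ) ^ a := by gcongr; linarith

lemma inv_rpow_mul_inv_le {q p a : ℝ} (hq : 0 < q) (hp₀ : 0 < p) (hp₁ : p ≤ 1) (ha : 1 ≤ a) :
    q⁻¹ ^ a * p⁻¹ ≤ (2 / (q * p)) ^ a := by
  calc q⁻¹ ^ a * p⁻¹ ≤ q⁻¹ ^ a * p⁻¹ ^ a := by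
        gcongr
        exact Real.self_le_rpow_of_one_le ((one_le_inv₀ hp₀).2 hp₁) ha
    _ = (1 / (q * p)) ^ a := by
        rw [← Real.mul_rpow (by positivity) (by positivity), ← mul_inv, one_div]
    _ ≤ (2 / (q * p)) ^ a := by gcongr; norm_num

lemma pow_four_mul_sq_le {q κ : ℝ} (ht₁ : 1 / 2 < t) (ht₂ : t < 1) (hq : 0 < q) (hκ₀ : 0 < κ)
    (hκ₁ : κ ≤ 1) (hM : 1 ≤ M) :
    κ ^ 4 * M ^ 2 ≤ (2 * t - 1) * (q⁻¹ * (2 * q * κ) ^ (2 / t) *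
      (2 / (q * (2 * t - 1))) ^ ((2 - t) / t) * M ^ ((1 + t) / t)) := by
  have hp : 0 < 2 * t - 1 := by linarith
  have ht₀ : 0 < t := by linarith
  have hM_pow : M ^ 2 ≤ M ^ ((1 + t) / t) := by
    rw [← Real.rpow_natCast]
    exact Real.rpow_le_rpow_of_exponent_le hM (by rw [le_div_iff₀ ht₀]; push_cast; linarith)
  have hq_cancel : q ^ (2 / t) * q⁻¹ ^ ((2 - t) / t) = q := by
    rw [Real.inv_rpow hq.le, ← Real.rpow_neg hq.le, ← Real.rpow_add hq,
      show 2 / t + -((2 - t) / t) = 1 by field_simp; ring, Real.rpow_one]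
  calc κ ^ 4 * M ^ 2
      = (2 * t - 1) * (2 * t - 1)⁻¹ * (q⁻¹ * (q ^ (2 / t) * q⁻¹ ^ ((2 - t) / t))) *
          (κ ^ 4 * M ^ 2) := by
        rw [hq_cancel, mul_inv_cancel₀ hp.ne', inv_mul_cancel₀ hq.ne', one_mul, one_mul]
    _ = (2 * t - 1) * (q⁻¹ * (q ^ (2 / t) * κ ^ 4) *
          (q⁻¹ ^ ((2 - t) / t) * (2 * t - 1)⁻¹) * M ^ 2) := by ring
    _ ≤ (2 * t - 1) * (q⁻¹ * (2 * q * κ) ^ (2 / t) *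
          (2 / (q * (2 * t - 1))) ^ ((2 - t) / t) * M ^ ((1 + t) / t)) := by
        gcongr
        · exact rpow_mul_pow_four_le hq hκ₀ hκ₁ (by positivity)
            (by rw [div_le_iff₀ ht₀]; linarith)
        · exact inv_rpow_mul_inv_le hq hp (by linarith) (by rw [le_div_iff₀ ht₀]; linarith)

lemma div_pow_four_le_mul_sq (ht₁ : 1 / 2 < t) (ht₂ : t < 1) (hM : 1 ≤ M)
    (h50 : 50 ≤ M ^ ((1 - t) / 2)) (hinv : ((1 - t) ^ 2)⁻¹ ≤ M ^ ((1 - t) / 2)) :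
    300 / (1 - t) ^ 4 ≤ ((1 - t) ^ 2) ^ 4 * M ^ 2 := by
  have : 0 < 1 - t := by linarith
  have hpow : (M ^ ((1 - t) / 2)) ^ 4 ≤ M := by
    rw [← Real.rpow_mul_natCast (by linarith)]
    exact Real.rpow_le_self_of_one_le hM (by push_cast; linarith)
  have hone : 1 ≤ ((1 - t) ^ 2) ^ 4 * M := by
    rw [← inv_le_iff_one_le_mul₀' (by positivity), ← inv_pow]
    exact (pow_le_pow_left₀ (by positivity) hinv 4).trans hpow
  calc 300 / (1 - t) ^ 4 ≤ 2500 / (1 - t) ^ 4 := by gcongr; norm_num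
    _ ≤ M := (div_pow_four_le h50 hinv).trans hpow
    _ ≤ ((1 - t) ^ 2) ^ 4 * M * M := le_mul_of_one_le_left (by linarith) hone
    _ = ((1 - t) ^ 2) ^ 4 * M ^ 2 := by ring

lemma div_pow_four_le_mul_of_le {q N : ℝ} (ht₁ : 1 / 2 < t) (ht₂ : t < 1) (hq : 0 < q) (hM : 1 ≤ M)
    (h50 : 50 ≤ M ^ ((1 - t) / 2)) (hinv : ((1 - t) ^ 2)⁻¹ ≤ M ^ ((1 - t) / 2))
    (hN : q⁻¹ * (2 * q * (1 - t) ^ 2) ^ (2 / t) * (2 / (q * (2 * t - 1))) ^ ((2 - t) / t) *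
      M ^ ((1 + t) / t) ≤ N) :
    300 / (1 - t) ^ 4 ≤ (2 * t - 1) * N := by
  calc 300 / (1 - t) ^ 4 ≤ ((1 - t) ^ 2) ^ 4 * M ^ 2 :=
        div_pow_four_le_mul_sq ht₁ ht₂ hM h50 hinv
    _ ≤ (2 * t - 1) * (q⁻¹ * (2 * q * (1 - t) ^ 2) ^ (2 / t) *
          (2 / (q * (2 * t - 1))) ^ ((2 - t) / t) * M ^ ((1 + t) / t)) :=
        pow_four_mul_sq_le ht₁ ht₂ hq (pow_pos (sub_pos.2 ht₂) 2) (by nlinarith) hM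
    _ ≤ (2 * t - 1) * N := mul_le_mul_of_nonneg_left hN (by linarith)

end Thresholds

theorem perfect_packing_AP_harmonic
    (t δ q r : ℝ) (ht₁ : 1 / 2 < t) (ht₂ : t < 1) (hδ : δ = 1 - t)
    (hqr : q > r) (hr : 0 ≤ r)
    (M N₀ : ℕ) (hM : 0 < M) (hN₀ : 0 < N₀)
    (hMbig : (M : ℝ) ≥
      max ((4 : ℝ) ^ ((1 : ℝ) / (1 - t)) *
          (2 * (2 * t - 1) / (1 - t - δ * t)) ^ (2 / (t * (1 - t))))
        ((50 * ((11 : ℝ) / 10) ^ (t * (2 - t))) ^ (2 / (1 - t))))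
    (hN₀1 : (N₀ : ℝ) ≥ 4752 * (M : ℝ) ^ 4)
    (hN₀2 : (N₀ : ℝ) ≥ 2 * r / (q * ((264 * (M : ℝ) ^ 2) ^ ((1 : ℝ) / t) - 2)))
    (hN₀3 : (N₀ : ℝ) ≥ (10 * q * (2 * q) ^ t * (M : ℝ)) ^ ((1 : ℝ) / (1 - t)))
    (hN₀4 : (N₀ : ℝ) ≥ (2 : ℝ) ^ ((1 : ℝ) / (1 - t - δ * t)) * (q + r) / q)
    (hN₀5 : (N₀ : ℝ) ≥
      q⁻¹ * (q * (1 - t - δ * t) / (q + r) ^ (t + δ * t)) ^ ((1 : ℝ) / (1 - t - δ * t)))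
    (hN₀6 : (N₀ : ℝ) ≥ 1 / (1 - (2 : ℝ) ^ (-(1 / (2 * t - 1)))))
    (hN₀7 : (N₀ : ℝ) ≥
      q⁻¹ * (2 * q * (1 - t - δ * t)) ^ (2 / (1 - δ)) *
        (2 / (q * (2 * t - 1))) ^ ((1 + δ) / (1 - δ)) * (M : ℝ) ^ ((2 - δ) / (1 - δ)))
    (hN₀8 : (N₀ : ℝ) ≥ q⁻¹ * (2 / (q * (2 * t - 1))) ^ ((1 : ℝ) / (2 * t - 1))) :
    ∀ n₀ : ℕ, N₀ ≤ n₀ →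
      ∃ (c : ℝ × ℝ) (pos : {n : ℕ // n₀ ≤ n} → ℝ × ℝ),
        PerfectlyPacked
          (fun n : {n : ℕ // n₀ ≤ n} => square (pos n) ((q * ((n : ℕ) : ℝ) + r) ^ (-t)))
          (square c
            (Real.sqrt (∑' n : {n : ℕ // n₀ ≤ n}, (q * ((n : ℕ) : ℝ) + r) ^ (-(2 * t))))) := by
  intro n₀ hn
  have hq : 0 < q := hr.trans_lt hqr
  have hM₁ : (1 : ℝ) ≤ M := Nat.one_le_cast.2 hM
  have hN : (N₀ : ℝ) ≤ n₀ + r / q :=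
    (Nat.cast_le.2 hn).trans (le_add_of_nonneg_right (div_nonneg hr hq.le))
  have hκ : 1 - t - δ * t = (1 - t) ^ 2 := by rw [hδ]; ring
  rw [hκ] at hMbig hN₀7
  rw [show 1 - δ = t by linarith, show 1 + δ = 2 - t by linarith,
    show 2 - δ = 1 + t by linarith] at hN₀7
  obtain ⟨hM4, hM50⟩ := max_le_iff.1 hMbig
  have h50 := fifty_le_rpow_half ht₁ ht₂ hM50
  have hinv := inv_sq_le_rpow_half ht₁ ht₂ h50 hM4
  exact perfect_packing_AP_harmonic_general ht₁ ht₂ hq n₀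
    (div_pow_four_le_mul_of_le ht₁ ht₂ hq hM₁ h50 hinv (hN₀7.le.trans hN))
    ((div_pow_four_rpow_le ht₂ M.cast_nonneg h50 hinv).trans (hN₀1.le.trans hN))
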